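/- arXiv:1506.02731 — 3 statements merged into one kernel-verified Lean document; each statement's English description precedes it below -/
import Mathlib

section
/- (Weak monotonicity formula) Let n ≥ 1, m ≥ 2, and let u = (u_1,…,u_m) be a solution of system (S) on ℝⁿ with H̃(u(x)) ≤ 0 for all x ∈ ℝⁿ. Let α ∈ ℝ satisfy α ≥ 2sΦ'(s)/Φ(s) for every s > 0 (i.e. α ≥ α* := sup_{s>0} 2sΦ'(s)/Φ(s)). Then the function I_α(r) := r^{α−n} ∫_{B_r} [ ∑_{i=1}^m Φ(|∇u_i|²) − 2H̃(u) ] dx is nondecreasing in r on (0,∞): I_α(r₁) ≤ I_α(r₂) whenever 0 < r₁ ≤ r₂. -/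
open MeasureTheory Metric Finset Filter
open scoped RealInnerProductSpace

noncomputable section

/-- Divergence of a vector field on Euclidean space. -/
def vdiv {n : ℕ} (F : EuclideanSpace ℝ (Fin n) → EuclideanSpace ℝ (Fin n))
    (x : EuclideanSpace ℝ (Fin n)) : ℝ :=
  ∑ i, fderiv ℝ F x (EuclideanSpace.single i 1) i

theorem aux_sum_single {n : ℕ} (L : EuclideanSpace ℝ (Fin n) →L[ℝ] ℝ)
    (v : EuclideanSpace ℝ (Fin n)) :
    ∑ i, L (EuclideanSpace.single i 1) * v i = L v := by
  conv_rhs => rw [← (EuclideanSpace.basisFun (Fin n) ℝ).sum_repr v]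
  simp [map_sum, mul_comm]

theorem vdiv_smul {n : ℕ} {f : EuclideanSpace ℝ (Fin n) → ℝ}
    {G : EuclideanSpace ℝ (Fin n) → EuclideanSpace ℝ (Fin n)} {x : EuclideanSpace ℝ (Fin n)}
    (hf : DifferentiableAt ℝ f x) (hG : DifferentiableAt ℝ G x) :
    vdiv (fun y => f y • G y) x = f x * vdiv G x + fderiv ℝ f x (G x) := by
  unfold vdiv
  rw [fderiv_fun_smul hf hG, ← aux_sum_single, Finset.mul_sum, ← Finset.sum_add_distrib]
  refine Finset.sum_congr rfl fun i _ => ?_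
  simp

theorem vdiv_sub {n : ℕ} {F G : EuclideanSpace ℝ (Fin n) → EuclideanSpace ℝ (Fin n)}
    {x : EuclideanSpace ℝ (Fin n)}
    (hF : DifferentiableAt ℝ F x) (hG : DifferentiableAt ℝ G x) :
    vdiv (fun y => F y - G y) x = vdiv F x - vdiv G x := by
  unfold vdiv
  rw [fderiv_fun_sub hF hG, ← Finset.sum_sub_distrib]
  simp

theorem vdiv_sum {n : ℕ} {ι : Type*} [Fintype ι]
    {F : ι → EuclideanSpace ℝ (Fin n) → EuclideanSpace ℝ (Fin n)}
    {x : EuclideanSpace ℝ (Fin n)}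
    (hF : ∀ i, DifferentiableAt ℝ (F i) x) :
    vdiv (fun y => ∑ i, F i y) x = ∑ i, vdiv (F i) x := by
  unfold vdiv
  rw [fderiv_fun_sum (fun i _ => hF i), Finset.sum_comm]
  simp

theorem vdiv_id {n : ℕ} (x : EuclideanSpace ℝ (Fin n)) :
    vdiv (fun y => y) x = n := by
  unfold vdiv
  simp

theorem integral_vdiv_zero {n : ℕ} {V : EuclideanSpace ℝ (Fin n) → EuclideanSpace ℝ (Fin n)}
    (hV : ContDiff ℝ 1 V) (hc : HasCompactSupport V) : ∫ x, vdiv V x = 0 := by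
  have hcont : Continuous (fderiv ℝ V) := hV.continuous_fderiv (by norm_num)
  have hint : ∀ i : Fin n, Integrable (fun x => fderiv ℝ V x (EuclideanSpace.single i 1) i) := by
    intro i
    apply Continuous.integrable_of_hasCompactSupport
    · fun_prop
    · exact (hc.fderiv (𝕜 := ℝ)).comp_left
        (g := fun L : EuclideanSpace ℝ (Fin n) →L[ℝ] EuclideanSpace ℝ (Fin n) =>
          L (EuclideanSpace.single i 1) i) (by simp)
  unfold vdiv
  rw [integral_finsetSum _ (fun i _ => hint i)]
  refine Finset.sum_eq_zero fun i _ => ?_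
  have hd : ∀ x, HasFDerivAt (fun x => V x i)
      ((EuclideanSpace.proj i : EuclideanSpace ℝ (Fin n) →L[ℝ] ℝ).comp (fderiv ℝ V x)) x := by
    intro x
    exact (EuclideanSpace.proj i : EuclideanSpace ℝ (Fin n) →L[ℝ] ℝ).hasFDerivAt.comp x
      (hV.differentiable (by norm_num) x).hasFDerivAt
  have hci : Integrable (fun x => V x i) := by
    apply Continuous.integrable_of_hasCompactSupport
    · have := hV.continuous
      fun_prop
    · exact hc.comp_left (g := fun v : EuclideanSpace ℝ (Fin n) => v i) (by simp)
  have := integral_mul_fderiv_eq_neg_fderiv_mul_of_integrable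
    (μ := (volume : Measure (EuclideanSpace ℝ (Fin n))))
    (f := fun _ => (1 : ℝ)) (g := fun x => V x i) (v := EuclideanSpace.single i 1)
    (by simp) (by simpa [(hd _).fderiv] using hint i) (by simpa using hci)
    (fun x _ => by simp) (fun x _ => (hd x).differentiableAt)
  simpa [(hd _).fderiv] using this

theorem grad_contDiff {n : ℕ} {f : EuclideanSpace ℝ (Fin n) → ℝ} (hf : ContDiff ℝ 2 f) :
    ContDiff ℝ 1 (gradient f) := by
  have h1 : ContDiff ℝ 1 (fderiv ℝ f) := hf.fderiv_right (by norm_num)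
  exact (InnerProductSpace.toDual ℝ (EuclideanSpace ℝ (Fin n))).symm.contDiff.comp h1

theorem grad_inner {n : ℕ} (f : EuclideanSpace ℝ (Fin n) → ℝ) (x v : EuclideanSpace ℝ (Fin n)) :
    ⟪gradient f x, v⟫ = fderiv ℝ f x v := by
  simp [gradient]

theorem grad_symm {n : ℕ} {f : EuclideanSpace ℝ (Fin n) → ℝ} (hf : ContDiff ℝ 2 f)
    (x v w : EuclideanSpace ℝ (Fin n)) :
    ⟪fderiv ℝ (gradient f) x v, w⟫ = ⟪fderiv ℝ (gradient f) x w, v⟫ := by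
  have h1 : ContDiff ℝ 1 (fderiv ℝ f) := hf.fderiv_right (by norm_num)
  have hs := (hf.contDiffAt (x := x)).isSymmSndFDerivAt (by simp)
  have key : ∀ v w, ⟪fderiv ℝ (gradient f) x v, w⟫ = fderiv ℝ (fderiv ℝ f) x v w := by
    intro v w
    have hg : HasFDerivAt (gradient f) (fderiv ℝ (gradient f) x) x :=
      ((grad_contDiff hf).differentiable (by norm_num) x).hasFDerivAt
    have h2 : HasFDerivAt (fun y => ⟪gradient f y, w⟫) _ x := hg.inner ℝ (hasFDerivAt_const w x)
    have h3 : HasFDerivAt (fun y => fderiv ℝ f y w) _ x :=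
      ((h1.differentiable (by norm_num) x).hasFDerivAt).clm_apply (hasFDerivAt_const w x)
    simp only [grad_inner] at h2
    have := congrArg (fun L => L v) (h2.unique h3)
    simpa using this
  rw [key, key, hs.eq]

theorem stress_div {n m : ℕ} {Φ : ℝ → ℝ} (hΦ : ContDiff ℝ 2 Φ)
    {H : Fin m → (Fin m → ℝ) → ℝ} 
    {Ht : (Fin m → ℝ) → ℝ} (hHt : ContDiff ℝ 2 Ht)
    (hHtgrad : ∀ i y, fderiv ℝ Ht y (Pi.single i 1) = H i y)
    {u : Fin m → EuclideanSpace ℝ (Fin n) → ℝ}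
    (hu : ∀ i, ContDiff ℝ 2 (u i))
    (hsol : ∀ i x, -vdiv (fun y => deriv Φ (‖gradient (u i) y‖ ^ 2) • gradient (u i) y) x
        = H i (fun j => u j x))
    {w : EuclideanSpace ℝ (Fin n) → ℝ} (hw : ContDiff ℝ 1 w) :
    ContDiff ℝ 1 (fun y => ((∑ i, Φ (‖gradient (u i) y‖ ^ 2)) - 2 * Ht (fun j => u j y))) ∧
    ContDiff ℝ 1 (fun y => w y • (((∑ i, Φ (‖gradient (u i) y‖ ^ 2)) - 2 * Ht (fun j => u j y)) • y
      - ∑ i, (2 * ⟪gradient (u i) y, y⟫) •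
        (deriv Φ (‖gradient (u i) y‖ ^ 2) • gradient (u i) y))) ∧
    ∀ x, vdiv (fun y => w y • (((∑ i, Φ (‖gradient (u i) y‖ ^ 2)) - 2 * Ht (fun j => u j y)) • y
      - ∑ i, (2 * ⟪gradient (u i) y, y⟫) •
        (deriv Φ (‖gradient (u i) y‖ ^ 2) • gradient (u i) y))) x
      = w x * (n * ((∑ i, Φ (‖gradient (u i) x‖ ^ 2)) - 2 * Ht (fun j => u j x))
          - ∑ i, 2 * deriv Φ (‖gradient (u i) x‖ ^ 2) * ‖gradient (u i) x‖ ^ 2)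
        + fderiv ℝ w x (((∑ i, Φ (‖gradient (u i) x‖ ^ 2)) - 2 * Ht (fun j => u j x)) • x
      - ∑ i, (2 * ⟪gradient (u i) x, x⟫) •
        (deriv Φ (‖gradient (u i) x‖ ^ 2) • gradient (u i) x)) := by
  have hg : ∀ i, ContDiff ℝ 1 (gradient (u i)) := fun i => grad_contDiff (hu i)
  have hΦ' : ContDiff ℝ 1 (deriv Φ) := by
    have : ContDiff ℝ (1 + 1) Φ := by simpa [one_add_one_eq_two] using hΦ
    exact (contDiff_succ_iff_deriv.1 this).2.2
  have hΦ1 : ContDiff ℝ 1 Φ := hΦ.of_le (by norm_num)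
  have hHt1 : ContDiff ℝ 1 Ht := hHt.of_le (by norm_num)
  have hu1 : ∀ i, ContDiff ℝ 1 (u i) := fun i => (hu i).of_le (by norm_num)
  have hn2 : ∀ i, ContDiff ℝ 1 (fun y => ‖gradient (u i) y‖ ^ 2) := fun i => (hg i).norm_sq ℝ
  have hU : ContDiff ℝ 1 (fun y => (fun j => u j y : Fin m → ℝ)) := contDiff_pi.2 hu1
  have he : ContDiff ℝ 1
      (fun y => ((∑ i, Φ (‖gradient (u i) y‖ ^ 2)) - 2 * Ht (fun j => u j y))) :=
    (ContDiff.sum fun i _ => hΦ1.comp (hn2 i)).sub (contDiff_const.mul (hHt1.comp hU))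
  have hF : ∀ i, ContDiff ℝ 1
      (fun y => deriv Φ (‖gradient (u i) y‖ ^ 2) • gradient (u i) y) :=
    fun i => (hΦ'.comp (hn2 i)).smul (hg i)
  have hp : ∀ i, ContDiff ℝ 1 (fun y => 2 * ⟪gradient (u i) y, y⟫) :=
    fun i => contDiff_const.mul ((hg i).inner ℝ contDiff_id)
  have hV0 : ContDiff ℝ 1
    (fun y => (((∑ i, Φ (‖gradient (u i) y‖ ^ 2)) - 2 * Ht (fun j => u j y)) • y
      - ∑ i, (2 * ⟪gradient (u i) y, y⟫) •
        (deriv Φ (‖gradient (u i) y‖ ^ 2) • gradient (u i) y))) :=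
    (he.smul contDiff_id).sub (ContDiff.sum fun i _ => (hp i).smul (hF i))
  have hA : ContDiff ℝ 1
      (fun y => ((∑ i, Φ (‖gradient (u i) y‖ ^ 2)) - 2 * Ht (fun j => u j y)) • y) :=
    he.smul contDiff_id
  have hB : ∀ i, ContDiff ℝ 1 (fun y => (2 * ⟪gradient (u i) y, y⟫) •
        (deriv Φ (‖gradient (u i) y‖ ^ 2) • gradient (u i) y)) := fun i => (hp i).smul (hF i)
  have hS : ContDiff ℝ 1 (fun y => ∑ i, (2 * ⟪gradient (u i) y, y⟫) •
        (deriv Φ (‖gradient (u i) y‖ ^ 2) • gradient (u i) y)) := ContDiff.sum fun i _ => hB i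
  refine ⟨he, hw.smul hV0, fun x => ?_⟩
  have one : (1 : WithTop ℕ∞) ≠ 0 := by norm_num
  rw [vdiv_smul (hw.differentiable one x) (hV0.differentiable one x)]
  congr 2
  rw [vdiv_sub (hA.differentiable one x) (hS.differentiable one x),
    vdiv_sum (fun i => (hB i).differentiable one x),
    vdiv_smul (he.differentiable one x) differentiableAt_fun_id, vdiv_id]
  have hG : ∀ i, HasFDerivAt (gradient (u i)) (fderiv ℝ (gradient (u i)) x) x :=
    fun i => ((hg i).differentiable one x).hasFDerivAt
  -- derivative of the density
  have hde : fderiv ℝ (fun y => ((∑ i, Φ (‖gradient (u i) y‖ ^ 2)) - 2 * Ht (fun j => u j y))) x x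
      = ∑ i, (deriv Φ (‖gradient (u i) x‖ ^ 2) *
          (2 * ⟪gradient (u i) x, fderiv ℝ (gradient (u i)) x x⟫)
          - 2 * (H i (fun j => u j x) * fderiv ℝ (u i) x x)) := by
    have h1 : ∀ i, HasFDerivAt (fun y => Φ (‖gradient (u i) y‖ ^ 2)) _ x := fun i =>
      ((hΦ1.differentiable one (‖gradient (u i) x‖ ^ 2)).hasDerivAt).comp_hasFDerivAt x
        (hG i).norm_sq
    have h2 : HasFDerivAt (fun y => (fun j => u j y : Fin m → ℝ))
        (ContinuousLinearMap.pi fun j => fderiv ℝ (u j) x) x :=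
      hasFDerivAt_pi.2 fun j => ((hu1 j).differentiable one x).hasFDerivAt
    have h3 : HasFDerivAt (fun y => Ht (fun j => u j y)) _ x :=
      ((hHt1.differentiable one (fun j => u j x)).hasFDerivAt).comp x h2
    have h4 := (HasFDerivAt.fun_sum (u := Finset.univ) fun i _ => h1 i).fun_sub (h3.const_mul 2)
    rw [h4.fderiv]
    have h5 : fderiv ℝ Ht (fun j => u j x) (fun j => fderiv ℝ (u j) x x)
        = ∑ i, H i (fun j => u j x) * fderiv ℝ (u i) x x := by
      conv_lhs => rw [pi_eq_sum_univ' (fun j => fderiv ℝ (u j) x x)]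
      rw [map_sum]
      refine Finset.sum_congr rfl fun i _ => ?_
      rw [map_smul, smul_eq_mul, mul_comm, ← hHtgrad i]
    have h6 : (ContinuousLinearMap.pi fun j => fderiv ℝ (u j) x) x
      = (fun j => fderiv ℝ (u j) x x) := rfl
    simp only [ContinuousLinearMap.sub_apply, ContinuousLinearMap.sum_apply,
      ContinuousLinearMap.smul_apply, ContinuousLinearMap.comp_apply, h6, h5, smul_eq_mul,
      Finset.sum_sub_distrib, Finset.mul_sum]
    simp
  rw [hde, add_comm, add_sub_assoc, ← sub_eq_zero, ]
  have hterm : ∀ i, vdiv (fun y => (2 * ⟪gradient (u i) y, y⟫) •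
        (deriv Φ (‖gradient (u i) y‖ ^ 2) • gradient (u i) y)) x
      = - 2 * (H i (fun j => u j x) * fderiv ℝ (u i) x x) + 
        2 * (deriv Φ (‖gradient (u i) x‖ ^ 2) *
          (⟪gradient (u i) x, fderiv ℝ (gradient (u i)) x x⟫ + ‖gradient (u i) x‖ ^ 2)) := by
    intro i
    rw [vdiv_smul ((hp i).differentiable one x) ((hF i).differentiable one x), ← hsol i x,
      grad_inner]
    have h1 := ((hG i).inner ℝ (hasFDerivAt_id x)).const_mul 2
    have h1' := h1.fderiv
    simp only [id] at h1'
    rw [h1']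
    have h2 := grad_symm (hu i) x (gradient (u i) x) x
    simp [inner_smul_left, inner_smul_right, real_inner_self_eq_norm_sq, h2]
    ring
  simp only [hterm, Finset.sum_sub_distrib, Finset.sum_add_distrib, mul_add, ← Finset.mul_sum, neg_mul, Finset.sum_neg_distrib]
  have : ∀ i, deriv Φ (‖gradient (u i) x‖ ^ 2) *
          (2 * ⟪gradient (u i) x, fderiv ℝ (gradient (u i)) x x⟫) = 
      2 * (deriv Φ (‖gradient (u i) x‖ ^ 2) *
          (⟪gradient (u i) x, fderiv ℝ (gradient (u i)) x x⟫)) := fun i => by ring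
  simp only [this, mul_assoc, ← Finset.mul_sum]
  ring

theorem integrable_of_ball {n : ℕ} {f : EuclideanSpace ℝ (Fin n) → ℝ} (hf : Continuous f) (r : ℝ)
    (h : ∀ x, r < ‖x‖ → f x = 0) : Integrable f := by
  apply hf.integrable_of_hasCompactSupport
  refine HasCompactSupport.intro (isCompact_closedBall 0 r) fun x hx => h x ?_
  simpa using hx

theorem one_lt_ratio {a r : ℝ} (hr : 0 < r) (h : r < a) : 1 < a ^ 2 / r ^ 2 := by
  rw [one_lt_div (by positivity)]
  nlinarith

theorem deriv_zero_of {χ : ℝ → ℝ} (h0 : ∀ t, 1 ≤ t → χ t = 0) {t : ℝ} (ht : 1 < t) :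
    deriv χ t = 0 := by
  have : χ =ᶠ[nhds t] fun _ => 0 := by
    filter_upwards [lt_mem_nhds ht] with s hs using h0 s hs.le
  rw [this.deriv_eq]
  simp

theorem mono_smooth {n : ℕ} {e : EuclideanSpace ℝ (Fin n) → ℝ} (he : Continuous e) (α : ℝ)
    {χ : ℝ → ℝ} (hχ : ContDiff ℝ 1 χ) (h0 : ∀ t, 1 ≤ t → χ t = 0)
    (hineq : ∀ r : ℝ, 0 < r → ∫ x, (χ (‖x‖ ^ 2 / r ^ 2) * (((n : ℝ) - α) * e x)
      + deriv χ (‖x‖ ^ 2 / r ^ 2) * (2 / r ^ 2 * (‖x‖ ^ 2 * e x))) ≤ 0)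
    (r₁ r₂ : ℝ) (h1 : 0 < r₁) (h12 : r₁ ≤ r₂) :
    r₁ ^ (α - (n : ℝ)) * (∫ x, χ (‖x‖ ^ 2 / r₁ ^ 2) * e x)
      ≤ r₂ ^ (α - (n : ℝ)) * (∫ x, χ (‖x‖ ^ 2 / r₂ ^ 2) * e x) := by
  have hχc : Continuous χ := hχ.continuous
  have hχ'c : Continuous (deriv χ) := hχ.continuous_deriv (by norm_num)
  have hint1 : ∀ r : ℝ, 0 < r → Integrable (fun x => χ (‖x‖ ^ 2 / r ^ 2) * e x) := by
    intro r hr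
    refine integrable_of_ball (by fun_prop) r fun x hx => ?_
    rw [h0 _ (one_lt_ratio hr hx).le, zero_mul]
  have hD : ∀ r : ℝ, 0 < r → HasDerivAt (fun r : ℝ => ∫ x, χ (‖x‖ ^ 2 / r ^ 2) * e x)
      (∫ x, deriv χ (‖x‖ ^ 2 / r ^ 2) * (-(2 * ‖x‖ ^ 2 / r ^ 3)) * e x) r := by
    intro r hr
    obtain ⟨M, hM⟩ := (isCompact_Icc (a := (0 : ℝ)) (b := 16)).exists_bound_of_continuousOn
      hχ'c.continuousOn
    have hM0 : 0 ≤ M := (norm_nonneg _).trans (hM 0 (by simp))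
    refine (hasDerivAt_integral_of_dominated_loc_of_deriv_le (𝕜 := ℝ)
      (F := fun (r : ℝ) (x : EuclideanSpace ℝ (Fin n)) => χ (‖x‖ ^ 2 / r ^ 2) * e x)
      (F' := fun (r : ℝ) (x : EuclideanSpace ℝ (Fin n)) =>
        deriv χ (‖x‖ ^ 2 / r ^ 2) * (-(2 * ‖x‖ ^ 2 / r ^ 3)) * e x)
      (s := ball r (r / 2))
      (bound := (closedBall (0 : EuclideanSpace ℝ (Fin n)) (2 * r)).indicator
        fun x => M * (2 * (2 * r) ^ 2 / (r / 2) ^ 3) * |e x|)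
      (ball_mem_nhds r (by positivity)) ?_ (hint1 r hr) ?_ ?_ ?_ ?_).2
    · exact Eventually.of_forall fun r => Continuous.aestronglyMeasurable (by fun_prop)
    · exact Continuous.aestronglyMeasurable (by fun_prop)
    · refine Eventually.of_forall fun x s hs => ?_
      rw [mem_ball, Real.dist_eq, abs_lt] at hs
      have hs0 : r / 2 < s := by linarith
      have hs1 : s < 2 * r := by linarith
      have hs00 : 0 < s := by linarith
      by_cases hx : ‖x‖ ≤ 2 * r
      · rw [Set.indicator_of_mem (by simpa using hx), norm_mul, norm_mul, norm_neg]
        have a1 : ‖deriv χ (‖x‖ ^ 2 / s ^ 2)‖ ≤ M := by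
          apply hM
          refine ⟨by positivity, ?_⟩
          rw [div_le_iff₀ (by positivity)]
          nlinarith [norm_nonneg x]
        have a2 : ‖2 * ‖x‖ ^ 2 / s ^ 3‖ ≤ 2 * (2 * r) ^ 2 / (r / 2) ^ 3 := by
          rw [Real.norm_of_nonneg (by positivity)]
          gcongr
        rw [Real.norm_eq_abs (e x)]
        gcongr
      · push Not at hx
        rw [Set.indicator_of_notMem (by simpa using hx),
          deriv_zero_of h0 (one_lt_ratio hs00 (hs1.trans hx))]
        simp
    · rw [integrable_indicator_iff measurableSet_closedBall]
      exact (Continuous.continuousOn (by fun_prop)).integrableOn_compact (isCompact_closedBall _ _)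
    · refine Eventually.of_forall fun x s hs => ?_
      rw [mem_ball, Real.dist_eq, abs_lt] at hs
      have hs00 : s ≠ 0 := by linarith
      have b1 : HasDerivAt (fun s : ℝ => ‖x‖ ^ 2 / s ^ 2) (-(2 * ‖x‖ ^ 2 / s ^ 3)) s := by
        have := (hasDerivAt_const s (‖x‖ ^ 2)).fun_div (hasDerivAt_pow 2 s) (by positivity)
        rw [show -(2 * ‖x‖ ^ 2 / s ^ 3)
          = (0 * s ^ 2 - ‖x‖ ^ 2 * (((2 : ℕ) : ℝ) * s ^ (2 - 1))) / (s ^ 2) ^ 2 by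
            push_cast
            field_simp
            ring]
        exact this
      exact (((hχ.differentiable (by norm_num) _).hasDerivAt).comp s b1).mul_const (e x)
  have hD2 : ∀ r : ℝ, 0 < r → HasDerivAt
      (fun r : ℝ => r ^ (α - (n : ℝ)) * ∫ x, χ (‖x‖ ^ 2 / r ^ 2) * e x)
      ((α - (n : ℝ)) * r ^ (α - (n : ℝ) - 1) * (∫ x, χ (‖x‖ ^ 2 / r ^ 2) * e x)
        + r ^ (α - (n : ℝ)) *
        (∫ x, deriv χ (‖x‖ ^ 2 / r ^ 2) * (-(2 * ‖x‖ ^ 2 / r ^ 3)) * e x)) r :=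
    fun r hr => (Real.hasDerivAt_rpow_const (Or.inl hr.ne')).mul (hD r hr)
  refine monotoneOn_of_deriv_nonneg (convex_Ioi (0 : ℝ))
    (fun r hr => (hD2 r hr).continuousAt.continuousWithinAt)
    (fun r hr => (hD2 r (by simpa using hr)).differentiableAt.differentiableWithinAt)
    (fun r hr => ?_) (Set.mem_Ioi.2 h1) (Set.mem_Ioi.2 (h1.trans_le h12)) h12
  have hr : 0 < r := by simpa using hr
  rw [(hD2 r hr).deriv]
  have hi2 : Integrable (fun x : EuclideanSpace ℝ (Fin n) =>
      deriv χ (‖x‖ ^ 2 / r ^ 2) * (-(2 * ‖x‖ ^ 2 / r ^ 3)) * e x) := by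
    refine integrable_of_ball (by fun_prop) r fun x hx => ?_
    rw [deriv_zero_of h0 (one_lt_ratio hr hx)]
    simp
  have hsplit : ∫ x, (χ (‖x‖ ^ 2 / r ^ 2) * (((n : ℝ) - α) * e x)
      + deriv χ (‖x‖ ^ 2 / r ^ 2) * (2 / r ^ 2 * (‖x‖ ^ 2 * e x)))
      = ((n : ℝ) - α) * (∫ x, χ (‖x‖ ^ 2 / r ^ 2) * e x)
        - r * (∫ x, deriv χ (‖x‖ ^ 2 / r ^ 2) * (-(2 * ‖x‖ ^ 2 / r ^ 3)) * e x) := by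
    rw [← integral_const_mul, ← integral_const_mul,
      ← integral_sub ((hint1 r hr).const_mul _) (hi2.const_mul _)]
    congr 1
    ext x
    field_simp
    ring
  have h := hineq r hr
  rw [hsplit] at h
  have hpow : r ^ (α - (n : ℝ)) = r ^ (α - (n : ℝ) - 1) * r := by
    rw [Real.rpow_sub_one hr.ne']
    field_simp
  rw [hpow]
  have hp : 0 < r ^ (α - (n : ℝ) - 1) := Real.rpow_pos_of_pos hr _
  nlinarith

theorem mono_limit {n : ℕ} {e : EuclideanSpace ℝ (Fin n) → ℝ} (he : Continuous e) (α : ℝ)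
    (hineq : ∀ χ : ℝ → ℝ, ContDiff ℝ 1 χ → (∀ t, 1 ≤ t → χ t = 0) → (∀ t, 0 ≤ χ t) →
      (∀ t, deriv χ t ≤ 0) →
      ∀ r : ℝ, 0 < r → ∫ x, (χ (‖x‖ ^ 2 / r ^ 2) * (((n : ℝ) - α) * e x)
      + deriv χ (‖x‖ ^ 2 / r ^ 2) * (2 / r ^ 2 * (‖x‖ ^ 2 * e x))) ≤ 0)
    (r₁ r₂ : ℝ) (h1 : 0 < r₁) (h12 : r₁ ≤ r₂) :
    r₁ ^ (α - (n : ℝ)) * (∫ x in ball (0 : EuclideanSpace ℝ (Fin n)) r₁, e x)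
      ≤ r₂ ^ (α - (n : ℝ)) * (∫ x in ball (0 : EuclideanSpace ℝ (Fin n)) r₂, e x) := by
  let χ : ℕ → ℝ → ℝ := fun k t => Real.smoothTransition (k * (1 - t))
  have hc : ∀ k, ContDiff ℝ 1 (χ k) := fun k =>
    (Real.smoothTransition.contDiff (n := 1)).comp (by fun_prop)
  have hz : ∀ k t, 1 ≤ t → χ k t = 0 := fun k t ht =>
    Real.smoothTransition.zero_of_nonpos
      (mul_nonpos_of_nonneg_of_nonpos (Nat.cast_nonneg k) (by linarith))
  have hnn : ∀ k t, 0 ≤ χ k t := fun k t => Real.smoothTransition.nonneg _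
  have hanti : ∀ k, Antitone (χ k) := fun k a b hab =>
    Real.smoothTransition.monotone (by gcongr)
  have hd : ∀ k t, deriv (χ k) t ≤ 0 := fun k t => (hanti k).deriv_nonpos
  have hlim : ∀ r : ℝ, 0 < r → Tendsto (fun k : ℕ => ∫ x, χ k (‖x‖ ^ 2 / r ^ 2) * e x) atTop
      (nhds (∫ x in ball (0 : EuclideanSpace ℝ (Fin n)) r, e x)) := by
    intro r hr
    rw [← integral_indicator measurableSet_ball]
    refine tendsto_integral_of_dominated_convergence
      ((closedBall (0 : EuclideanSpace ℝ (Fin n)) r).indicator fun x => |e x|) ?_ ?_ ?_ ?_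
    · intro k
      have := (hc k).continuous
      exact Continuous.aestronglyMeasurable (by fun_prop)
    · rw [integrable_indicator_iff measurableSet_closedBall]
      exact (Continuous.continuousOn (by fun_prop)).integrableOn_compact (isCompact_closedBall _ _)
    · refine fun k => Eventually.of_forall fun x => ?_
      by_cases hx : ‖x‖ ≤ r
      · rw [Set.indicator_of_mem (by simpa using hx), norm_mul, Real.norm_of_nonneg (hnn k _)]
        exact mul_le_of_le_one_left (norm_nonneg _) (Real.smoothTransition.le_one _)
      · push Not at hx
        rw [Set.indicator_of_notMem (by simpa using hx), hz k _ (one_lt_ratio hr hx).le]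
        simp
    · refine Eventually.of_forall fun x => ?_
      by_cases hx : ‖x‖ < r
      · rw [Set.indicator_of_mem (by simpa using hx)]
        have ht : 0 < 1 - ‖x‖ ^ 2 / r ^ 2 := by
          rw [sub_pos, div_lt_one (by positivity)]
          gcongr
        have hk : Tendsto (fun k : ℕ => (k : ℝ) * (1 - ‖x‖ ^ 2 / r ^ 2)) atTop atTop :=
          tendsto_natCast_atTop_atTop.atTop_mul_const ht
        refine tendsto_const_nhds.congr' ?_
        filter_upwards [hk.eventually_ge_atTop 1] with k hk
        simp only [χ]
        rw [Real.smoothTransition.one_of_one_le hk, one_mul]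
      · rw [Set.indicator_of_notMem (by simpa using hx)]
        push Not at hx
        refine tendsto_const_nhds.congr fun k => ?_
        rw [hz k _ ((one_le_div (by positivity)).2 (by gcongr)), zero_mul]
  exact le_of_tendsto_of_tendsto' ((hlim r₁ h1).const_mul _)
    ((hlim r₂ (h1.trans_le h12)).const_mul _) fun k =>
    mono_smooth he α (hc k) (hz k) (hineq _ (hc k) (hz k) (hnn k) (hd k)) r₁ r₂ h1 h12

/-- **Weak monotonicity formula**: for a solution of the quasilinear system
`-div(Φ'(|∇uᵢ|²)∇uᵢ) = Hᵢ(u)` with `H̃(u) ≤ 0` and `α ≥ 2sΦ'(s)/Φ(s)` for every `s > 0`,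
the function `I_α(r) = r^{α-n} ∫_{B_r} (∑ᵢ Φ(|∇uᵢ|²) - 2H̃(u))` is nondecreasing in `r`. -/
theorem weak_monotonicity_formula
    (n m : ℕ) (hn : 1 ≤ n) (hm : 2 ≤ m)
    (Φ : ℝ → ℝ) (hΦ : ContDiff ℝ 2 Φ) (hΦ0 : Φ 0 = 0)
    (hΦpos : ∀ s : ℝ, 0 < s → 0 < Φ s)
    (hΦ'pos : ∀ s : ℝ, 0 < s → 0 < deriv Φ s)
    (hΦell : ∀ s : ℝ, 0 < s → 0 < deriv Φ s + 2 * s * deriv (deriv Φ) s)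
    (H : Fin m → (Fin m → ℝ) → ℝ) (hH : ∀ i, ContDiff ℝ 1 (H i))
    (Ht : (Fin m → ℝ) → ℝ) (hHt : ContDiff ℝ 2 Ht)
    (hHtgrad : ∀ i y, fderiv ℝ Ht y (Pi.single i 1) = H i y)
    (u : Fin m → EuclideanSpace ℝ (Fin n) → ℝ)
    (hu : ∀ i, ContDiff ℝ 2 (u i))
    (hsol : ∀ i x, -vdiv (fun y => deriv Φ (‖gradient (u i) y‖ ^ 2) • gradient (u i) y) x
        = H i (fun j => u j x))
    (hHneg : ∀ x : EuclideanSpace ℝ (Fin n), Ht (fun j => u j x) ≤ 0)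
    (α : ℝ) (hα : ∀ s : ℝ, 0 < s → 2 * s * deriv Φ s / Φ s ≤ α) :
    ∀ r₁ r₂ : ℝ, 0 < r₁ → r₁ ≤ r₂ →
      r₁ ^ (α - (n : ℝ)) * (∫ x in ball (0 : EuclideanSpace ℝ (Fin n)) r₁,
          ((∑ i, Φ (‖gradient (u i) x‖ ^ 2)) - 2 * Ht (fun j => u j x)))
        ≤ r₂ ^ (α - (n : ℝ)) * (∫ x in ball (0 : EuclideanSpace ℝ (Fin n)) r₂,
          ((∑ i, Φ (‖gradient (u i) x‖ ^ 2)) - 2 * Ht (fun j => u j x))) := by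
  have hα0 : 0 ≤ α := by
    refine le_trans ?_ (hα 1 one_pos)
    have := hΦpos 1 one_pos
    have := hΦ'pos 1 one_pos
    positivity
  have hΦα : ∀ s : ℝ, 0 ≤ s → 2 * deriv Φ s * s ≤ α * Φ s := by
    intro s hs
    rcases hs.eq_or_lt with rfl | hs
    · simp [hΦ0]
    · have := hα s hs
      rw [div_le_iff₀ (hΦpos s hs)] at this
      linarith
  have he := (stress_div hΦ hHt hHtgrad hu hsol (w := fun _ => 0) contDiff_const).1
  refine mono_limit he.continuous α ?_
  intro χ hχ h0 hnn hd r hr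
  have hw : ContDiff ℝ 1 (fun x : EuclideanSpace ℝ (Fin n) => χ (‖x‖ ^ 2 / r ^ 2)) :=
    hχ.comp ((contDiff_id.norm_sq ℝ).div_const _)
  obtain ⟨-, hV, hdiv⟩ := stress_div hΦ hHt hHtgrad hu hsol hw
  have hcs := HasCompactSupport.intro (isCompact_closedBall (0 : EuclideanSpace ℝ (Fin n)) r)
    (f := fun y => χ (‖y‖ ^ 2 / r ^ 2) •
      (((∑ i, Φ (‖gradient (u i) y‖ ^ 2)) - 2 * Ht (fun j => u j y)) • y
      - ∑ i, (2 * ⟪gradient (u i) y, y⟫) •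
        (deriv Φ (‖gradient (u i) y‖ ^ 2) • gradient (u i) y))) (fun x hx => by
      rw [h0 _ (one_lt_ratio hr (by simpa using hx)).le, zero_smul])
  have hzero := integral_vdiv_zero hV hcs
  have hVc : Continuous (fun x => vdiv (fun y => χ (‖y‖ ^ 2 / r ^ 2) •
      (((∑ i, Φ (‖gradient (u i) y‖ ^ 2)) - 2 * Ht (fun j => u j y)) • y
      - ∑ i, (2 * ⟪gradient (u i) y, y⟫) •
        (deriv Φ (‖gradient (u i) y‖ ^ 2) • gradient (u i) y))) x) := by
    have := hV.continuous_fderiv (by norm_num)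
    unfold vdiv
    fun_prop
  have hfw : ∀ x v : EuclideanSpace ℝ (Fin n),
      fderiv ℝ (fun x : EuclideanSpace ℝ (Fin n) => χ (‖x‖ ^ 2 / r ^ 2)) x v
      = deriv χ (‖x‖ ^ 2 / r ^ 2) * (2 / r ^ 2 * ⟪x, v⟫) := by
    intro x v
    have h1 : HasFDerivAt (fun x : EuclideanSpace ℝ (Fin n) => ‖x‖ ^ 2 * (r ^ 2)⁻¹) _ x :=
      (hasFDerivAt_id x).norm_sq.mul_const _
    have h2 := ((hχ.differentiable (by norm_num) (‖x‖ ^ 2 * (r ^ 2)⁻¹)).hasDerivAt).comp_hasFDerivAt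
      x h1
    have h3 := h2.fderiv
    simp only [Function.comp_def, ← div_eq_mul_inv] at h3
    rw [h3]
    simp
    ring_nf
    simp
  rw [← hzero]
  have hχc : Continuous χ := hχ.continuous
  have hχ'c : Continuous (deriv χ) := hχ.continuous_deriv (by norm_num)
  have hec := he.continuous
  refine integral_mono (integrable_of_ball ?_ r ?_) (integrable_of_ball hVc r ?_) ?_
  · fun_prop
  · intro x hx
    have := one_lt_ratio hr hx
    rw [h0 _ this.le, deriv_zero_of h0 this]
    simp
  · intro x hx
    have := one_lt_ratio hr hx
    rw [hdiv, hfw, h0 _ this.le, deriv_zero_of h0 this]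
    simp
  · intro x
    dsimp only
    rw [hdiv, hfw, inner_sub_right, inner_smul_right, inner_sum, real_inner_self_eq_norm_sq]
    simp only [inner_smul_right]
    have hq : 0 ≤ ∑ i, 2 * ⟪gradient (u i) x, x⟫ *
        (deriv Φ (‖gradient (u i) x‖ ^ 2) * ⟪x, gradient (u i) x⟫) := by
      refine Finset.sum_nonneg fun i _ => ?_
      by_cases hz : gradient (u i) x = 0
      · simp [hz]
      · have := hΦ'pos (‖gradient (u i) x‖ ^ 2) (by positivity)
        rw [real_inner_comm x]
        have h2 := mul_self_nonneg ⟪x, gradient (u i) x⟫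
        nlinarith [mul_nonneg this.le h2]
    have hs : ∑ i, 2 * deriv Φ (‖gradient (u i) x‖ ^ 2) * ‖gradient (u i) x‖ ^ 2
        ≤ α * ∑ i, Φ (‖gradient (u i) x‖ ^ 2) := by
      rw [Finset.mul_sum]
      exact Finset.sum_le_sum fun i _ => hΦα _ (by positivity)
    have hneg := mul_nonpos_of_nonneg_of_nonpos hα0 (hHneg x)
    apply add_le_add
    · refine mul_le_mul_of_nonneg_left ?_ (hnn _)
      linarith
    · refine mul_le_mul_of_nonpos_left ?_ (hd _)
      refine mul_le_mul_of_nonneg_left ?_ (by positivity)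
      linarith
end
end

section
/- Let n ≥ 1, m ≥ 2, and let u = (u_1,…,u_m) be an m-tuple of C² functions u_i : ℝⁿ → ℝ solving the prescribed mean curvature system −div(∇u_i/√(1+|∇u_i|²)) = H_i(u) on ℝⁿ for every i, and suppose H̃(u(x)) ≤ 0 for all x ∈ ℝⁿ. Then for every α ≥ 2 the function I_α(r) := r^{α−n} ∫_{B_r} [ ∑_{i=1}^m 2(√(1+|∇u_i|²) − 1) − 2H̃(u) ] dx is nondecreasing in r on (0,∞). -/
open MeasureTheory Metric Finset Filter
open scoped RealInnerProductSpace

noncomputable section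

lemma aux_fderiv_coord {n : ℕ} {X : EuclideanSpace ℝ (Fin n) → EuclideanSpace ℝ (Fin n)}
    (hX : ContDiff ℝ 1 X) (i : Fin n) (x v : EuclideanSpace ℝ (Fin n)) :
    fderiv ℝ (fun y => X y i) x v = fderiv ℝ X x v i := by
  have h : HasFDerivAt X (fderiv ℝ X x) x :=
    ((hX.differentiable one_ne_zero) x).hasFDerivAt
  have h2 := ((EuclideanSpace.proj i : EuclideanSpace ℝ (Fin n) →L[ℝ] ℝ).hasFDerivAt).comp x h
  have h3 : HasFDerivAt (fun y => X y i)
      ((EuclideanSpace.proj i : EuclideanSpace ℝ (Fin n) →L[ℝ] ℝ).comp (fderiv ℝ X x)) x := h2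
  rw [h3.fderiv]
  rfl

lemma aux_coord_contDiff {n : ℕ} {X : EuclideanSpace ℝ (Fin n) → EuclideanSpace ℝ (Fin n)}
    (hX : ContDiff ℝ 1 X) (i : Fin n) : ContDiff ℝ 1 (fun y => X y i) :=
  (EuclideanSpace.proj i : EuclideanSpace ℝ (Fin n) →L[ℝ] ℝ).contDiff.comp hX

lemma aux_vdiv_cont {n : ℕ} {X : EuclideanSpace ℝ (Fin n) → EuclideanSpace ℝ (Fin n)}
    (hX : ContDiff ℝ 1 X) : Continuous (vdiv X) := by
  have h : vdiv X = fun x => ∑ i, fderiv ℝ (fun y => X y i) x (EuclideanSpace.single i 1) := by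
    funext x
    simp only [vdiv, aux_fderiv_coord hX]
  rw [h]
  refine continuous_finsetSum _ fun i _ => ?_
  exact ((aux_coord_contDiff hX i).continuous_fderiv one_ne_zero).clm_apply continuous_const

lemma aux_parts {n : ℕ} {X : EuclideanSpace ℝ (Fin n) → EuclideanSpace ℝ (Fin n)}
    (hX : ContDiff ℝ 1 X) {φ : EuclideanSpace ℝ (Fin n) → ℝ} (hφ : ContDiff ℝ 1 φ)
    (hc : HasCompactSupport φ) :
    ∫ x, φ x * vdiv X x = - ∫ x, fderiv ℝ φ x (X x) := by
  have hint1 : ∀ i : Fin n, Integrable (fun x => φ x *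
      fderiv ℝ (fun y => X y i) x (EuclideanSpace.single i 1)) := fun i => by
    apply Continuous.integrable_of_hasCompactSupport
    · exact hφ.continuous.mul (((aux_coord_contDiff hX i).continuous_fderiv one_ne_zero).clm_apply
        continuous_const)
    · exact hc.mul_right
  have hint2 : ∀ i : Fin n, Integrable (fun x => fderiv ℝ φ x (EuclideanSpace.single i 1) *
      X x i) := fun i => by
    apply Continuous.integrable_of_hasCompactSupport
    · exact ((hφ.continuous_fderiv one_ne_zero).clm_apply
        continuous_const).mul (aux_coord_contDiff hX i).continuous
    · exact (hc.fderiv_apply (𝕜 := ℝ) _).mul_right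
  have hint3 : ∀ i : Fin n, Integrable (fun x => φ x * X x i) := fun i => by
    apply Continuous.integrable_of_hasCompactSupport
    · exact hφ.continuous.mul (aux_coord_contDiff hX i).continuous
    · exact hc.mul_right
  have e1 : ∀ x, φ x * vdiv X x = ∑ i, φ x *
      fderiv ℝ (fun y => X y i) x (EuclideanSpace.single i 1) := fun x => by
    simp only [vdiv, aux_fderiv_coord hX, Finset.mul_sum]
  have e2 : ∀ x, fderiv ℝ φ x (X x) = ∑ i, fderiv ℝ φ x (EuclideanSpace.single i 1) * X x i := by
    intro x
    have hx : X x = ∑ i, X x i • EuclideanSpace.single i (1:ℝ) := by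
      ext j
      simp [Finset.sum_apply, Pi.single_apply]
    conv_lhs => rw [hx]
    simp only [map_sum, map_smul, smul_eq_mul]
    exact Finset.sum_congr rfl fun i _ => mul_comm _ _
  simp only [e1, e2]
  rw [integral_finsetSum _ fun i _ => hint1 i, integral_finsetSum _ fun i _ => hint2 i,
    ← Finset.sum_neg_distrib]
  refine Finset.sum_congr rfl fun i _ => ?_
  exact integral_mul_fderiv_eq_neg_fderiv_mul_of_integrable (hint2 i) (hint1 i) (hint3 i)
    (fun x _ => hφ.differentiable one_ne_zero x)
    (fun x _ => (aux_coord_contDiff hX i).differentiable one_ne_zero x)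

lemma aux_div_nonneg {n : ℕ} {X : EuclideanSpace ℝ (Fin n) → EuclideanSpace ℝ (Fin n)}
    (hX : ContDiff ℝ 1 X) (hXx : ∀ x, 0 ≤ ⟪x, X x⟫) (r : ℝ) (hr : 0 < r) :
    0 ≤ ∫ x in ball (0 : EuclideanSpace ℝ (Fin n)) r, vdiv X x := by
  set φ : ℕ → EuclideanSpace ℝ (Fin n) → ℝ := fun k x =>
    Real.smoothTransition (k * (r ^ 2 - ‖x‖ ^ 2)) with hφdef
  have hin : ∀ k : ℕ, ContDiff ℝ 1 (fun x : EuclideanSpace ℝ (Fin n) =>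
      (k : ℝ) * (r ^ 2 - ‖x‖ ^ 2)) := fun k =>
    contDiff_const.mul (contDiff_const.sub (contDiff_norm_sq ℝ))
  have hφ : ∀ k, ContDiff ℝ 1 (φ k) := fun k =>
    (Real.smoothTransition.contDiff (n := 1)).comp (hin k)
  have hz : ∀ k x, x ∉ closedBall (0 : EuclideanSpace ℝ (Fin n)) r → φ k x = 0 := by
    intro k x hx
    apply Real.smoothTransition.zero_of_nonpos
    simp only [mem_closedBall, dist_zero_right, not_le] at hx
    have : r ^ 2 ≤ ‖x‖ ^ 2 := by gcongr
    exact mul_nonpos_of_nonneg_of_nonpos (Nat.cast_nonneg k) (by linarith)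
  have hc : ∀ k, HasCompactSupport (φ k) := fun k =>
    HasCompactSupport.intro (isCompact_closedBall _ _) (hz k)
  have hnn : ∀ k, 0 ≤ ∫ x, φ k x * vdiv X x := by
    intro k
    rw [aux_parts hX (hφ k) (hc k), ← integral_neg]
    refine integral_nonneg fun x => ?_
    have h1 : HasFDerivAt (fun x : EuclideanSpace ℝ (Fin n) => (k : ℝ) * (r ^ 2 - ‖x‖ ^ 2))
        ((k : ℝ) • (-((2:ℝ) • innerSL ℝ x))) x := by
      have := (hasStrictFDerivAt_norm_sq x).hasFDerivAt
      simpa [two_smul] using (this.const_sub (r ^ 2)).const_mul (k : ℝ)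
    have h2 : HasDerivAt Real.smoothTransition
        (deriv Real.smoothTransition (k * (r ^ 2 - ‖x‖ ^ 2))) (k * (r ^ 2 - ‖x‖ ^ 2)) :=
      ((Real.smoothTransition.contDiff (n := 1)).differentiable
        (by norm_num) _).hasDerivAt
    have h3 : HasFDerivAt (φ k) ((deriv Real.smoothTransition (k * (r ^ 2 - ‖x‖ ^ 2))) •
        ((k : ℝ) • (-((2:ℝ) • innerSL ℝ x)))) x := by
      have h3' := HasDerivAt.comp_hasFDerivAt x h2 h1
      exact h3'
    have h4 : 0 ≤ deriv Real.smoothTransition (k * (r ^ 2 - ‖x‖ ^ 2)) :=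
      Real.smoothTransition.monotone.deriv_nonneg
    rw [h3.fderiv]
    simp only [ContinuousLinearMap.smul_apply, ContinuousLinearMap.neg_apply,
      innerSL_apply_apply, smul_eq_mul, Pi.zero_apply]
    have := mul_nonneg h4 (mul_nonneg (Nat.cast_nonneg (α := ℝ) k) (hXx x))
    nlinarith
  have hlim : Tendsto (fun k => ∫ x, φ k x * vdiv X x) atTop
      (nhds (∫ x, (ball (0 : EuclideanSpace ℝ (Fin n)) r).indicator (vdiv X) x)) := by
    refine tendsto_integral_of_dominated_convergence
      ((closedBall (0 : EuclideanSpace ℝ (Fin n)) r).indicator fun x => |vdiv X x|) ?_ ?_ ?_ ?_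
    · intro k
      exact ((hφ k).continuous.mul (aux_vdiv_cont hX)).aestronglyMeasurable
    · rw [integrable_indicator_iff measurableSet_closedBall]
      exact ((aux_vdiv_cont hX).abs.continuousOn).integrableOn_compact (isCompact_closedBall _ _)
    · intro k
      refine Eventually.of_forall fun x => ?_
      by_cases hx : x ∈ closedBall (0 : EuclideanSpace ℝ (Fin n)) r
      · rw [Set.indicator_of_mem hx, Real.norm_eq_abs, abs_mul]
        have : |φ k x| ≤ 1 := by
          rw [abs_of_nonneg (Real.smoothTransition.nonneg _)]
          exact Real.smoothTransition.le_one _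
        exact mul_le_of_le_one_left (abs_nonneg _) this
      · rw [Set.indicator_of_notMem hx, hz k x hx]; simp
    · refine Eventually.of_forall fun x => ?_
      by_cases hx : x ∈ ball (0 : EuclideanSpace ℝ (Fin n)) r
      · rw [Set.indicator_of_mem hx]
        apply tendsto_const_nhds.congr'
        have hx' : ‖x‖ < r := by simpa using hx
        have hpos : 0 < r ^ 2 - ‖x‖ ^ 2 := by
          have : ‖x‖ ^ 2 < r ^ 2 := by gcongr
          linarith
        obtain ⟨N, hN⟩ := exists_nat_ge (1 / (r ^ 2 - ‖x‖ ^ 2))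
        filter_upwards [eventually_ge_atTop N] with k hk
        have : φ k x = 1 := by
          apply Real.smoothTransition.one_of_one_le
          rw [← div_le_iff₀ hpos]
          exact hN.trans (by exact_mod_cast hk)
        rw [this, one_mul]
      · rw [Set.indicator_of_notMem hx]
        apply tendsto_const_nhds.congr
        intro k
        have hx' : r ≤ ‖x‖ := by simpa using hx
        have : φ k x = 0 := by
          apply Real.smoothTransition.zero_of_nonpos
          have : r ^ 2 ≤ ‖x‖ ^ 2 := by gcongr
          exact mul_nonpos_of_nonneg_of_nonpos (Nat.cast_nonneg k) (by linarith)
        rw [this, zero_mul]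
  rw [integral_indicator measurableSet_ball] at hlim
  exact ge_of_tendsto' hlim hnn

lemma aux_grad_contDiff {n : ℕ} {v : EuclideanSpace ℝ (Fin n) → ℝ} (hv : ContDiff ℝ 2 v) :
    ContDiff ℝ 1 (gradient v) := by
  have h : gradient v = fun x => (InnerProductSpace.toDual ℝ _).symm (fderiv ℝ v x) := rfl
  rw [h]
  exact (InnerProductSpace.toDual ℝ _).symm.contDiff.comp (hv.fderiv_right (by norm_num))

lemma aux_grad_symm {n : ℕ} {v : EuclideanSpace ℝ (Fin n) → ℝ} (hv : ContDiff ℝ 2 v)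
    (x a b : EuclideanSpace ℝ (Fin n)) :
    ⟪fderiv ℝ (gradient v) x a, b⟫ = ⟪fderiv ℝ (gradient v) x b, a⟫ := by
  have hd : Differentiable ℝ (fderiv ℝ v) :=
    (hv.fderiv_right (m := 1) (by norm_num)).differentiable one_ne_zero
  have key : ∀ a b, ⟪fderiv ℝ (gradient v) x a, b⟫ = fderiv ℝ (fderiv ℝ v) x a b := by
    intro a b
    have h : HasFDerivAt (gradient v) _ x :=
      ((InnerProductSpace.toDual ℝ (EuclideanSpace ℝ (Fin n))).symm.toContinuousLinearEquiv
        |>.toContinuousLinearMap |>.hasFDerivAt).comp x (hd x).hasFDerivAt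
    rw [h.fderiv]
    exact InnerProductSpace.toDual_symm_apply
  rw [key, key]
  exact (hv.contDiffAt.isSymmSndFDerivAt (by simp)) a b

lemma aux_sqrt_fderiv {n : ℕ} {v : EuclideanSpace ℝ (Fin n) → ℝ} (hv : ContDiff ℝ 2 v)
    (x a : EuclideanSpace ℝ (Fin n)) :
    fderiv ℝ (fun y => Real.sqrt (1 + ‖gradient v y‖ ^ 2)) x a =
      (Real.sqrt (1 + ‖gradient v x‖ ^ 2))⁻¹ * ⟪gradient v x, fderiv ℝ (gradient v) x a⟫ := by
  have hg := ((aux_grad_contDiff hv).differentiable one_ne_zero x).hasFDerivAt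
  have h1 := (hg.norm_sq.const_add 1).sqrt (by positivity)
  rw [h1.fderiv]
  simp
  field_simp

lemma aux_sqrt_contDiff {n : ℕ} {v : EuclideanSpace ℝ (Fin n) → ℝ} (hv : ContDiff ℝ 2 v) :
    ContDiff ℝ 1 (fun y => Real.sqrt (1 + ‖gradient v y‖ ^ 2)) := by
  refine ContDiff.sqrt ?_ fun x => by positivity
  exact contDiff_const.add ((aux_grad_contDiff hv).norm_sq ℝ)

lemma aux_F_contDiff {n : ℕ} {v : EuclideanSpace ℝ (Fin n) → ℝ} (hv : ContDiff ℝ 2 v) :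
    ContDiff ℝ 1 (fun y => (Real.sqrt (1 + ‖gradient v y‖ ^ 2))⁻¹ • gradient v y) :=
  ((aux_sqrt_contDiff hv).inv fun x => by positivity).smul (aux_grad_contDiff hv)

lemma aux_vdiv_smul {n : ℕ} {f : EuclideanSpace ℝ (Fin n) → ℝ}
    {F : EuclideanSpace ℝ (Fin n) → EuclideanSpace ℝ (Fin n)}
    (hf : ContDiff ℝ 1 f) (hF : ContDiff ℝ 1 F) (x : EuclideanSpace ℝ (Fin n)) :
    vdiv (fun y => f y • F y) x = f x * vdiv F x + fderiv ℝ f x (F x) := by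
  have h := (hf.differentiable one_ne_zero x).hasFDerivAt.smul
    (hF.differentiable one_ne_zero x).hasFDerivAt
  have e2 : fderiv ℝ f x (F x) = ∑ i, fderiv ℝ f x (EuclideanSpace.single i 1) * F x i := by
    have hx : F x = ∑ i, F x i • EuclideanSpace.single i (1:ℝ) := by
      ext j
      simp [Finset.sum_apply, Pi.single_apply]
    conv_lhs => rw [hx]
    simp only [map_sum, map_smul, smul_eq_mul]
    exact Finset.sum_congr rfl fun i _ => mul_comm _ _
  have h' : HasFDerivAt (fun y => f y • F y) _ x := h
  rw [e2]
  simp only [vdiv, h'.fderiv, Finset.mul_sum, ← Finset.sum_add_distrib]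
  refine Finset.sum_congr rfl fun i _ => ?_
  simp

lemma aux_inner_contDiff {n : ℕ} {v : EuclideanSpace ℝ (Fin n) → ℝ} (hv : ContDiff ℝ 2 v) :
    ContDiff ℝ 1 (fun y => ⟪y, gradient v y⟫) :=
  contDiff_id.inner ℝ (aux_grad_contDiff hv)

lemma aux_vdiv_X {n : ℕ} {v : EuclideanSpace ℝ (Fin n) → ℝ} (hv : ContDiff ℝ 2 v)
    (x : EuclideanSpace ℝ (Fin n)) :
    vdiv (fun y => ⟪y, gradient v y⟫ •
      ((Real.sqrt (1 + ‖gradient v y‖ ^ 2))⁻¹ • gradient v y)) x =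
    ⟪x, gradient v x⟫ *
      vdiv (fun y => (Real.sqrt (1 + ‖gradient v y‖ ^ 2))⁻¹ • gradient v y) x
    + (Real.sqrt (1 + ‖gradient v x‖ ^ 2))⁻¹ * ‖gradient v x‖ ^ 2
    + fderiv ℝ (fun y => Real.sqrt (1 + ‖gradient v y‖ ^ 2)) x x := by
  rw [aux_vdiv_smul (aux_inner_contDiff hv) (aux_F_contDiff hv), aux_sqrt_fderiv hv]
  have hg := ((aux_grad_contDiff hv).differentiable one_ne_zero x).hasFDerivAt
  have h := (hasFDerivAt_id x).inner ℝ hg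
  have h' : HasFDerivAt (fun y => ⟪y, gradient v y⟫) _ x := h
  rw [h'.fderiv, add_assoc]
  congr 1
  rw [map_smul, smul_eq_mul, ← mul_add]
  congr 1
  have s := aux_grad_symm hv x (gradient v x) x
  have s1 := real_inner_comm (fderiv ℝ (gradient v) x x) (gradient v x)
  have s2 := real_inner_comm (fderiv ℝ (gradient v) x (gradient v x)) x
  have s3 := real_inner_self_eq_norm_sq (gradient v x)
  simp only [ContinuousLinearMap.comp_apply, ContinuousLinearMap.prod_apply,
    fderivInnerCLM_apply, ContinuousLinearMap.id_apply, id]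
  linarith

lemma aux_mono {n : ℕ} {e : EuclideanSpace ℝ (Fin n) → ℝ} (he : ContDiff ℝ 1 e) (α : ℝ)
    (hpos : ∀ r : ℝ, 0 < r → 0 ≤ ∫ x in ball (0 : EuclideanSpace ℝ (Fin n)) r,
      (α * e x + fderiv ℝ e x x)) (r₁ r₂ : ℝ) (h1 : 0 < r₁) (h12 : r₁ ≤ r₂) :
    r₁ ^ (α - (n : ℝ)) * (∫ x in ball (0 : EuclideanSpace ℝ (Fin n)) r₁, e x) ≤
    r₂ ^ (α - (n : ℝ)) * (∫ x in ball (0 : EuclideanSpace ℝ (Fin n)) r₂, e x) := by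
  have hde : Continuous fun x => fderiv ℝ e x x :=
    (he.continuous_fderiv one_ne_zero).clm_apply continuous_id
  have scale : ∀ (f : EuclideanSpace ℝ (Fin n) → ℝ) (r : ℝ), 0 < r →
      ∫ x in ball (0 : EuclideanSpace ℝ (Fin n)) 1, f (r • x) =
        (r ^ n)⁻¹ * ∫ x in ball (0 : EuclideanSpace ℝ (Fin n)) r, f x := by
    intro f r hr
    have := Measure.setIntegral_comp_smul_of_pos (volume : Measure (EuclideanSpace ℝ (Fin n)))
      f (ball 0 1) hr
    rw [this, smul_unitBall_of_pos hr]
    simp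
  set J : ℝ → ℝ := fun r => ∫ x in ball (0 : EuclideanSpace ℝ (Fin n)) 1, e (r • x) with hJ
  have hJe : ∀ r, 0 < r → r ^ (α - (n : ℝ)) *
      (∫ x in ball (0 : EuclideanSpace ℝ (Fin n)) r, e x) = r ^ α * J r := by
    intro r hr
    rw [hJ]
    simp only
    rw [scale e r hr, Real.rpow_sub hr, Real.rpow_natCast]
    ring
  have hsub : ∀ f : EuclideanSpace ℝ (Fin n) → ℝ, Continuous f →
      IntegrableOn f (ball (0 : EuclideanSpace ℝ (Fin n)) 1) := fun f hf =>
    (hf.continuousOn.integrableOn_compact (isCompact_closedBall _ _)).mono_set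
      ball_subset_closedBall
  have hJd : ∀ r, HasDerivAt J
      (∫ x in ball (0 : EuclideanSpace ℝ (Fin n)) 1, fderiv ℝ e (r • x) x) r := by
    intro r
    have hcont : Continuous fun p : ℝ × EuclideanSpace ℝ (Fin n) => fderiv ℝ e (p.1 • p.2) p.2 :=
      ((he.continuous_fderiv one_ne_zero).comp (continuous_fst.smul continuous_snd)).clm_apply
        continuous_snd
    obtain ⟨C, hC⟩ := ((isCompact_closedBall r 1).prod
      (isCompact_closedBall (0 : EuclideanSpace ℝ (Fin n)) 1)).exists_bound_of_continuousOn
        hcont.continuousOn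
    refine (hasDerivAt_integral_of_dominated_loc_of_deriv_le (s := closedBall r 1)
      (bound := fun _ => C) (F := fun r x => e (r • x))
      (F' := fun r x => fderiv ℝ e (r • x) x)
      (closedBall_mem_nhds r one_pos) ?_ ?_ ?_ ?_ ?_ ?_).2
    · refine Eventually.of_forall fun s => ?_
      exact (he.continuous.comp (continuous_const_smul s)).aestronglyMeasurable
    · exact hsub _ (he.continuous.comp (continuous_const_smul r))
    · exact (hcont.comp (Continuous.prodMk_right r)).aestronglyMeasurable
    · refine (ae_restrict_iff' measurableSet_ball).2 (Eventually.of_forall fun x hx s hs => ?_)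
      exact hC (s, x) ⟨hs, ball_subset_closedBall hx⟩
    · exact hsub _ continuous_const
    · refine Eventually.of_forall fun x s _ => ?_
      have hs : HasDerivAt (fun t : ℝ => t • x) x s := by
        simpa using (hasDerivAt_id s).smul_const x
      exact ((he.differentiable one_ne_zero (s • x)).hasFDerivAt).comp_hasDerivAt s hs
  have hd : ∀ r, 0 < r → HasDerivAt (fun r => r ^ α * J r)
      (α * r ^ (α - 1) * J r + r ^ α *
        ∫ x in ball (0 : EuclideanSpace ℝ (Fin n)) 1, fderiv ℝ e (r • x) x) r := fun r hr =>
    (Real.hasDerivAt_rpow_const (Or.inl hr.ne')).mul (hJd r)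
  have hnn : ∀ r, 0 < r → 0 ≤ α * r ^ (α - 1) * J r + r ^ α *
        ∫ x in ball (0 : EuclideanSpace ℝ (Fin n)) 1, fderiv ℝ e (r • x) x := by
    intro r hr
    have h := scale (fun x => α * e x + fderiv ℝ e x x) r hr
    have h0 : 0 ≤ (r ^ n)⁻¹ * ∫ x in ball (0 : EuclideanSpace ℝ (Fin n)) r,
        (α * e x + fderiv ℝ e x x) := mul_nonneg (by positivity) (hpos r hr)
    rw [← h] at h0
    have h5 : ∫ x in ball (0 : EuclideanSpace ℝ (Fin n)) 1,
        (α * e (r • x) + fderiv ℝ e (r • x) (r • x)) = α * J r +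
        r * ∫ x in ball (0 : EuclideanSpace ℝ (Fin n)) 1, fderiv ℝ e (r • x) x := by
      rw [integral_add, integral_const_mul, ← integral_const_mul r]
      · simp [hJ]
      · exact hsub _ (continuous_const.mul (he.continuous.comp (continuous_const_smul r)))
      · exact hsub _ (hde.comp (continuous_const_smul r))
    rw [h5] at h0
    have h6 : r ^ α = r ^ (α - 1) * r := by
      rw [Real.rpow_sub_one hr.ne']
      field_simp
    rw [h6]
    have := mul_nonneg (Real.rpow_nonneg hr.le (α - 1)) h0
    linarith
  rw [hJe r₁ h1, hJe r₂ (h1.trans_le h12)]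
  have hm : MonotoneOn (fun r => r ^ α * J r) (Set.Ioi 0) := by
    apply monotoneOn_of_deriv_nonneg (convex_Ioi 0)
    · exact fun r hr => (hd r hr).continuousAt.continuousWithinAt
    · rw [interior_Ioi]
      exact fun r hr => (hd r hr).differentiableAt.differentiableWithinAt
    · rw [interior_Ioi]
      intro r hr
      rw [(hd r hr).deriv]
      exact hnn r hr
  exact hm h1 (h1.trans_le h12) h12

lemma aux_scalar (s : ℝ) (hs : 0 ≤ s) :
    (Real.sqrt (1 + s))⁻¹ * s ≤ 2 * (Real.sqrt (1 + s) - 1) := by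
  have h1 : 1 ≤ Real.sqrt (1 + s) := by
    rw [Real.one_le_sqrt]; linarith
  have h2 := Real.sq_sqrt (show 0 ≤ 1 + s by linarith)
  set w := Real.sqrt (1 + s)
  rw [inv_mul_le_iff₀ (by linarith)]
  nlinarith

/-- **Weak monotonicity formula for the prescribed mean curvature system**:
for a solution of `-div(∇uᵢ/√(1+|∇uᵢ|²)) = Hᵢ(u)` with `H̃(u) ≤ 0` and `α ≥ 2`,
the function `I_α(r) = r^{α-n} ∫_{B_r} (∑ᵢ 2(√(1+|∇uᵢ|²)-1) - 2H̃(u))`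
is nondecreasing in `r`. -/
theorem weak_monotonicity_mean_curvature
    (n m : ℕ) (hn : 1 ≤ n) (hm : 2 ≤ m)
    (H : Fin m → (Fin m → ℝ) → ℝ) (hH : ∀ i, ContDiff ℝ 1 (H i))
    (Ht : (Fin m → ℝ) → ℝ) (hHt : ContDiff ℝ 2 Ht)
    (hHtgrad : ∀ i y, fderiv ℝ Ht y (Pi.single i 1) = H i y)
    (u : Fin m → EuclideanSpace ℝ (Fin n) → ℝ)
    (hu : ∀ i, ContDiff ℝ 2 (u i))
    (hsol : ∀ i x, -vdiv (fun y =>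
        (Real.sqrt (1 + ‖gradient (u i) y‖ ^ 2))⁻¹ • gradient (u i) y) x
        = H i (fun j => u j x))
    (hHneg : ∀ x : EuclideanSpace ℝ (Fin n), Ht (fun j => u j x) ≤ 0)
    (α : ℝ) (hα : 2 ≤ α) :
    ∀ r₁ r₂ : ℝ, 0 < r₁ → r₁ ≤ r₂ →
      r₁ ^ (α - (n : ℝ)) * (∫ x in ball (0 : EuclideanSpace ℝ (Fin n)) r₁,
          ((∑ i, 2 * (Real.sqrt (1 + ‖gradient (u i) x‖ ^ 2) - 1))
            - 2 * Ht (fun j => u j x)))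
        ≤ r₂ ^ (α - (n : ℝ)) * (∫ x in ball (0 : EuclideanSpace ℝ (Fin n)) r₂,
          ((∑ i, 2 * (Real.sqrt (1 + ‖gradient (u i) x‖ ^ 2) - 1))
            - 2 * Ht (fun j => u j x))) := by
  classical
  set e : EuclideanSpace ℝ (Fin n) → ℝ := fun x =>
    (∑ i, 2 * (Real.sqrt (1 + ‖gradient (u i) x‖ ^ 2) - 1)) - 2 * Ht (fun j => u j x) with hedef
  have hU : ContDiff ℝ 2 (fun x => fun j => u j x) := contDiff_pi.2 hu
  have hHu : ContDiff ℝ 1 (fun x => Ht (fun j => u j x)) := (hHt.comp hU).of_le (by norm_num)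
  have he : ContDiff ℝ 1 e := by
    refine ContDiff.sub (ContDiff.sum fun i _ => ?_) (contDiff_const.mul hHu)
    exact contDiff_const.mul ((aux_sqrt_contDiff (hu i)).sub contDiff_const)
  have hHd : ∀ x, fderiv ℝ (fun x => Ht (fun j => u j x)) x x =
      ∑ i, H i (fun j => u j x) * ⟪x, gradient (u i) x⟫ := by
    intro x
    have hUd : HasFDerivAt (fun x => fun j => u j x)
        (ContinuousLinearMap.pi fun j => fderiv ℝ (u j) x) x :=
      hasFDerivAt_pi.2 fun j => ((hu j).differentiable two_ne_zero x).hasFDerivAt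
    have hc : HasFDerivAt (fun x => Ht (fun j => u j x)) _ x :=
      (hHt.differentiable two_ne_zero (fun j => u j x)).hasFDerivAt.comp x hUd
    rw [hc.fderiv]
    have hx : (ContinuousLinearMap.pi fun j => fderiv ℝ (u j) x) x =
        ∑ i, ⟪x, gradient (u i) x⟫ • (Pi.single i (1:ℝ) : Fin m → ℝ) := by
      ext j
      simp [Finset.sum_apply, Pi.single_apply]
    rw [ContinuousLinearMap.comp_apply, hx]
    simp only [map_sum, map_smul, smul_eq_mul, hHtgrad]
    exact Finset.sum_congr rfl fun i _ => mul_comm _ _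
  have hed : ∀ x, fderiv ℝ e x x =
      (∑ i, 2 * fderiv ℝ (fun y => Real.sqrt (1 + ‖gradient (u i) y‖ ^ 2)) x x)
      - 2 * ∑ i, H i (fun j => u j x) * ⟪x, gradient (u i) x⟫ := by
    intro x
    have hs : ∀ i, HasFDerivAt (fun y => 2 * (Real.sqrt (1 + ‖gradient (u i) y‖ ^ 2) - 1))
        ((2:ℝ) • fderiv ℝ (fun y => Real.sqrt (1 + ‖gradient (u i) y‖ ^ 2)) x) x := fun i =>
      ((((aux_sqrt_contDiff (hu i)).differentiable one_ne_zero x).hasFDerivAt).sub_const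
        1).const_mul 2
    have hd : HasFDerivAt e _ x := (HasFDerivAt.fun_sum fun i (_ : i ∈ Finset.univ) => hs i).sub
      (((hHu.differentiable one_ne_zero x).hasFDerivAt).const_mul 2)
    rw [hd.fderiv, ← hHd]
    simp
  set X : Fin m → EuclideanSpace ℝ (Fin n) → EuclideanSpace ℝ (Fin n) := fun i y =>
    ⟪y, gradient (u i) y⟫ •
      ((Real.sqrt (1 + ‖gradient (u i) y‖ ^ 2))⁻¹ • gradient (u i) y) with hXdef
  have hX : ∀ i, ContDiff ℝ 1 (X i) := fun i =>
    (aux_inner_contDiff (hu i)).smul (aux_F_contDiff (hu i))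
  have hXx : ∀ i x, 0 ≤ ⟪x, X i x⟫ := by
    intro i x
    rw [hXdef]
    simp only [inner_smul_right]
    have := mul_nonneg (inv_nonneg.2 (Real.sqrt_nonneg (1 + ‖gradient (u i) x‖ ^ 2)))
      (mul_self_nonneg ⟪x, gradient (u i) x⟫)
    nlinarith
  have hpt : ∀ x, ∑ i, 2 * vdiv (X i) x ≤ α * e x + fderiv ℝ e x x := by
    intro x
    have hS : ∑ i, (Real.sqrt (1 + ‖gradient (u i) x‖ ^ 2))⁻¹ * ‖gradient (u i) x‖ ^ 2 ≤
        ∑ i, 2 * (Real.sqrt (1 + ‖gradient (u i) x‖ ^ 2) - 1) :=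
      Finset.sum_le_sum fun i _ => aux_scalar _ (by positivity)
    have hS0 : 0 ≤ ∑ i, (Real.sqrt (1 + ‖gradient (u i) x‖ ^ 2))⁻¹ * ‖gradient (u i) x‖ ^ 2 :=
      Finset.sum_nonneg fun i _ => by positivity
    have hE : ∑ i, 2 * (Real.sqrt (1 + ‖gradient (u i) x‖ ^ 2) - 1) ≤ e x := by
      have := hHneg x
      simp only [hedef]
      linarith
    have hv : ∑ i, 2 * vdiv (X i) x =
        2 * (∑ i, (Real.sqrt (1 + ‖gradient (u i) x‖ ^ 2))⁻¹ * ‖gradient (u i) x‖ ^ 2)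
        + fderiv ℝ e x x := by
      rw [hed, Finset.mul_sum, Finset.mul_sum, ← Finset.sum_sub_distrib, ← Finset.sum_add_distrib]
      refine Finset.sum_congr rfl fun i _ => ?_
      rw [hXdef]
      simp only
      rw [aux_vdiv_X (hu i), ← hsol i x]
      ring
    rw [hv]
    nlinarith
  intro r₁ r₂ h1 h12
  refine aux_mono he α (fun r hr => ?_) r₁ r₂ h1 h12
  have hint : ∀ f : EuclideanSpace ℝ (Fin n) → ℝ, Continuous f →
      IntegrableOn f (ball (0 : EuclideanSpace ℝ (Fin n)) r) := fun f hf =>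
    (hf.continuousOn.integrableOn_compact (isCompact_closedBall _ _)).mono_set
      ball_subset_closedBall
  have hXi : ∀ i, IntegrableOn (fun x => 2 * vdiv (X i) x)
      (ball (0 : EuclideanSpace ℝ (Fin n)) r) := fun i =>
    hint _ (continuous_const.mul (aux_vdiv_cont (hX i)))
  have hI : 0 ≤ ∫ x in ball (0 : EuclideanSpace ℝ (Fin n)) r, ∑ i, 2 * vdiv (X i) x := by
    rw [integral_finsetSum _ fun i _ => hXi i]
    refine Finset.sum_nonneg fun i _ => ?_
    rw [integral_const_mul]
    exact mul_nonneg zero_le_two (aux_div_nonneg (hX i) (hXx i) r hr)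
  refine hI.trans (setIntegral_mono ?_ ?_ hpt)
  · exact integrable_finsetSum _ fun i _ => hXi i
  · exact hint _ ((continuous_const.mul he.continuous).add
      ((he.continuous_fderiv one_ne_zero).clm_apply continuous_id))
end
end

section
/- Let n ≥ 1, m ≥ 2, p > 1, and let u = (u_1,…,u_m) be an m-tuple of C² functions u_i : ℝⁿ → ℝ solving the p-Laplacian system −div(|∇u_i|^{p−2}∇u_i) = H_i(u) on ℝⁿ for every i, and suppose H̃(u(x)) ≤ 0 for all x ∈ ℝⁿ. Then for every α ≥ p the function I_α(r) := r^{α−n} ∫_{B_r} [ ∑_{i=1}^m (2/p)|∇u_i|^p − 2H̃(u) ] dx is nondecreasing in r on (0,∞). -/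
open MeasureTheory Metric Finset Filter
open scoped RealInnerProductSpace

noncomputable section

lemma aux_hasFDerivAt {E F : Type*} [NormedAddCommGroup E] [InnerProductSpace ℝ E]
    [NormedAddCommGroup F] [NormedSpace ℝ F] (q : ℝ) (B : E →L[ℝ] E →L[ℝ] F) (z : E) (hz : z ≠ 0) :
    HasFDerivAt (fun z : E => ‖z‖ ^ q • B z z)
      (‖z‖ ^ q • (B z + B.flip z) + ((q * ‖z‖ ^ (q - 2)) • innerSL ℝ z).smulRight (B z z)) z := by
  have hz' : 0 < ‖z‖ := norm_pos_iff.mpr hz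
  have h1 : HasFDerivAt (fun z : E => ‖z‖ ^ q) ((q * ‖z‖ ^ (q - 2)) • innerSL ℝ z) z := by
    have h := ((hasStrictFDerivAt_norm_sq z).hasFDerivAt).rpow_const (p := q / 2)
      (Or.inl (by positivity))
    have e : (fun z : E => (‖z‖ ^ 2) ^ (q / 2)) = fun z : E => ‖z‖ ^ q := by
      funext w
      rw [← Real.rpow_natCast, ← Real.rpow_mul (norm_nonneg _)]
      congr 1; push_cast; ring
    rw [e] at h
    convert h using 1
    rw [← Real.rpow_natCast, ← Real.rpow_mul (norm_nonneg _)]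
    ext v
    simp
    have : (2 : ℝ) * (q / 2 - 1) = q - 2 := by ring
    rw [this]; ring
  have h2 : HasFDerivAt (fun z : E => B z z) (B z + B.flip z) z := by
    have := (B.hasFDerivAt (x := z)).clm_apply (hasFDerivAt_id z)
    exact this
  exact h1.smul h2

lemma aux_contDiff {E F : Type*} [NormedAddCommGroup E] [InnerProductSpace ℝ E]
    [NormedAddCommGroup F] [NormedSpace ℝ F] (q : ℝ) (hq : -1 < q) (B : E →L[ℝ] E →L[ℝ] F) :
    ContDiff ℝ 1 (fun z : E => ‖z‖ ^ q • B z z) ∧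
      HasFDerivAt (fun z : E => ‖z‖ ^ q • B z z) (0 : E →L[ℝ] F) 0 := by
  have h0 : HasFDerivAt (fun z : E => ‖z‖ ^ q • B z z) (0 : E →L[ℝ] F) 0 := by
    rw [hasFDerivAt_iff_isLittleO_nhds_zero]
    simp only [zero_add, map_zero, smul_zero, sub_zero, zero_apply]
    have hb : (fun z : E => ‖z‖ ^ q • B z z) =O[nhds 0] fun z : E => ‖z‖ ^ (q + 1) * ‖z‖ := by
      refine Asymptotics.IsBigO.of_bound ‖B‖ (Eventually.of_forall fun z => ?_)
      rcases eq_or_ne z 0 with rfl | hz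
      · simp
      have hz' : 0 < ‖z‖ := norm_pos_iff.mpr hz
      rw [norm_smul, Real.norm_of_nonneg (by positivity), Real.norm_of_nonneg (by positivity),
        Real.rpow_add hz', Real.rpow_one]
      calc ‖z‖ ^ q * ‖B z z‖ ≤ ‖z‖ ^ q * (‖B‖ * ‖z‖ * ‖z‖) := by
            gcongr; exact B.le_opNorm₂ z z
        _ = _ := by ring
    refine hb.trans_isLittleO ?_
    have : (fun z : E => ‖z‖ ^ (q + 1)) =o[nhds 0] fun _ : E => (1 : ℝ) := by
      rw [Asymptotics.isLittleO_one_iff]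
      have hc : Continuous fun z : E => ‖z‖ ^ (q + 1) :=
        continuous_norm.rpow_const fun _ => Or.inr (by linarith)
      have := hc.tendsto 0
      simpa [Real.zero_rpow (by linarith : q + 1 ≠ 0)] using this
    have h := this.mul_isBigO (Asymptotics.isBigO_refl (fun z : E => ‖z‖) (nhds 0))
    simp only [one_mul] at h
    exact h.of_norm_right
  refine ⟨?_, h0⟩
  rw [contDiff_one_iff_fderiv]
  refine ⟨fun z => ?_, continuous_iff_continuousAt.mpr fun z => ?_⟩
  · rcases eq_or_ne z 0 with rfl | hz
    · exact h0.differentiableAt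
    · exact (aux_hasFDerivAt q B z hz).differentiableAt
  rcases eq_or_ne z 0 with rfl | hz
  · rw [ContinuousAt, h0.fderiv]
    refine squeeze_zero_norm (a := fun z => (2 + |q|) * ‖B‖ * ‖z‖ ^ (q + 1)) (fun z => ?_) ?_
    · rcases eq_or_ne z 0 with rfl | hz
      · rw [h0.fderiv]; simp; positivity
      have hz' : 0 < ‖z‖ := norm_pos_iff.mpr hz
      rw [(aux_hasFDerivAt q B z hz).fderiv]
      have hB : ‖B z‖ ≤ ‖B‖ * ‖z‖ := B.le_opNorm z
      have hB' : ‖B.flip z‖ ≤ ‖B‖ * ‖z‖ := by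
        simpa using B.flip.le_opNorm z
      have e1 : ‖z‖ ^ (q + 1) = ‖z‖ ^ q * ‖z‖ := by rw [Real.rpow_add hz', Real.rpow_one]
      have e2 : ‖z‖ ^ q = ‖z‖ ^ (q - 2) * (‖z‖ * ‖z‖) := by
        have : q = (q - 2) + 1 + 1 := by ring
        rw [this, Real.rpow_add hz', Real.rpow_add hz', Real.rpow_one]; ring_nf
      calc _ ≤ ‖z‖ ^ q * (‖B‖ * ‖z‖ + ‖B‖ * ‖z‖)
            + (|q| * ‖z‖ ^ (q - 2)) * ‖z‖ * (‖B‖ * ‖z‖ * ‖z‖) := by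
            refine (norm_add_le _ _).trans (add_le_add ?_ ?_)
            · rw [norm_smul, Real.norm_of_nonneg (by positivity)]
              gcongr
              exact (norm_add_le _ _).trans (add_le_add hB hB')
            · rw [ContinuousLinearMap.norm_smulRight_apply, norm_smul, norm_mul,
                Real.norm_of_nonneg (by positivity : 0 ≤ ‖z‖ ^ (q - 2)), Real.norm_eq_abs,
                innerSL_apply_norm]
              gcongr; exact B.le_opNorm₂ z z
        _ = _ := by rw [e1, e2]; ring
    · have hc : Continuous fun z : E => (2 + |q|) * ‖B‖ * ‖z‖ ^ (q + 1) :=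
        continuous_const.mul (continuous_norm.rpow_const fun _ => Or.inr (by linarith))
      have := hc.tendsto 0
      simpa [Real.zero_rpow (by linarith : q + 1 ≠ 0)] using this
  · have hc : ContDiffAt ℝ 1 (fun z : E => ‖z‖ ^ q • B z z) z := by
      refine ContDiffAt.smul ?_ ?_
      · exact (contDiffAt_norm ℝ hz).rpow_const_of_ne (norm_ne_zero_iff.mpr hz)
      · exact (B.contDiff.clm_apply contDiff_id).contDiffAt
    exact hc.continuousAt_fderiv (by norm_num)

lemma integral_fderiv_zero {n : ℕ} (f : EuclideanSpace ℝ (Fin n) → ℝ) (hf : ContDiff ℝ 1 f)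
    (hc : HasCompactSupport f) (v : EuclideanSpace ℝ (Fin n)) :
    ∫ x, fderiv ℝ f x v = 0 := by
  have hd := hf.continuous_fderiv (by norm_num)
  have h := integral_mul_fderiv_eq_neg_fderiv_mul_of_integrable (μ := volume)
    (f := fun _ : EuclideanSpace ℝ (Fin n) => (1 : ℝ)) (g := f) (v := v) (by simp)
    (by
      simp only [one_mul]
      exact (hd.clm_apply continuous_const).integrable_of_hasCompactSupport
        (hc.fderiv_apply (𝕜 := ℝ) v))
    (by simpa using hf.continuous.integrable_of_hasCompactSupport hc)
    (fun _ _ => differentiableAt_const _) (fun x _ => hf.differentiable (by norm_num) x)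
  simpa using h

/-- A `C¹` field pointing outward has nonnegative divergence integral on balls. -/
lemma integral_div_nonneg {n : ℕ} (V : EuclideanSpace ℝ (Fin n) → EuclideanSpace ℝ (Fin n))
    (hV : ContDiff ℝ 1 V) (hpos : ∀ x, 0 ≤ ⟪x, V x⟫) (r : ℝ) (hr : 0 < r) :
    0 ≤ ∫ x in ball (0 : EuclideanSpace ℝ (Fin n)) r, vdiv V x := by
  have hVd : Differentiable ℝ V := hV.differentiable (by norm_num)
  have hdc : Continuous (vdiv V) := by
    unfold vdiv
    refine continuous_finsetSum _ fun i _ => ?_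
    have := (hV.continuous_fderiv (by norm_num)).clm_apply
      (continuous_const (y := EuclideanSpace.single i (1 : ℝ)))
    exact (EuclideanSpace.proj (𝕜 := ℝ) i).continuous.comp this
  let φ : ℕ → EuclideanSpace ℝ (Fin n) → ℝ :=
    fun k x => Real.smoothTransition (k * (r ^ 2 - ‖x‖ ^ 2))
  have hφc : ∀ k, ContDiff ℝ 1 (φ k) := fun k =>
    Real.smoothTransition.contDiff.comp
      (contDiff_const.mul (contDiff_const.sub (contDiff_norm_sq ℝ)))
  have hφ0 : ∀ k x, x ∉ ball (0 : EuclideanSpace ℝ (Fin n)) r → φ k x = 0 := by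
    intro k x hx
    apply Real.smoothTransition.zero_of_nonpos
    have : r ≤ ‖x‖ := by simpa using hx
    have : r ^ 2 ≤ ‖x‖ ^ 2 := by gcongr
    exact mul_nonpos_of_nonneg_of_nonpos (by positivity) (by linarith)
  have hφs : ∀ k, HasCompactSupport (φ k) := fun k =>
    HasCompactSupport.intro (isCompact_closedBall (0 : EuclideanSpace ℝ (Fin n)) r)
      fun x hx => hφ0 k x fun h => hx (ball_subset_closedBall h)
  -- sign of derivative of cutoff
  have hφd : ∀ k x, fderiv ℝ (φ k) x (V x) ≤ 0 := by
    intro k x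
    have h1 := ((hasStrictFDerivAt_norm_sq x).hasFDerivAt.const_sub (r ^ 2)).const_mul (k : ℝ)
    have h2 : HasDerivAt Real.smoothTransition
        (deriv Real.smoothTransition ((k : ℝ) * (r ^ 2 - ‖x‖ ^ 2))) ((k : ℝ) * (r ^ 2 - ‖x‖ ^ 2)) :=
      ((Real.smoothTransition.contDiff (n := 1)).differentiable (by norm_num) _).hasDerivAt
    have h3 := h2.comp_hasFDerivAt x h1
    have h3' : HasFDerivAt (φ k) _ x := h3
    rw [h3'.fderiv]
    have h4 : 0 ≤ deriv Real.smoothTransition ((k : ℝ) * (r ^ 2 - ‖x‖ ^ 2)) :=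
      Real.smoothTransition.monotone.deriv_nonneg
    have h5 : innerSL ℝ x (V x) = ⟪x, V x⟫ := rfl
    simp only [smul_apply, neg_apply, h5, smul_eq_mul, nsmul_eq_mul, Nat.cast_ofNat]
    have := mul_nonneg h4 (mul_nonneg (Nat.cast_nonneg (α := ℝ) k) (hpos x))
    nlinarith
  have hdiv : ∀ k x, vdiv (fun y => φ k y • V y) x
      = φ k x * vdiv V x + fderiv ℝ (φ k) x (V x) := by
    intro k x
    have h : HasFDerivAt (fun y => φ k y • V y) _ x :=
      (((hφc k).differentiable (by norm_num)) x).hasFDerivAt.smul (hVd x).hasFDerivAt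
    unfold vdiv
    rw [h.fderiv, Finset.mul_sum]
    have hx : V x = ∑ i, V x i • EuclideanSpace.single i (1 : ℝ) := by
      ext j; simp [Finset.sum_apply, Pi.single_apply]
    conv_rhs => rw [hx]
    rw [map_sum, ← Finset.sum_add_distrib]
    refine Finset.sum_congr rfl fun i _ => ?_
    simp; ring
  have hzero : ∀ k, ∫ x, vdiv (fun y => φ k y • V y) x = 0 := by
    intro k
    have hC : ContDiff ℝ 1 (fun y => φ k y • V y) := (hφc k).smul hV
    have e : ∀ x, vdiv (fun y => φ k y • V y) x
        = ∑ i, fderiv ℝ (fun y => φ k y * V y i) x (EuclideanSpace.single i 1) := by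
      intro x
      unfold vdiv
      refine Finset.sum_congr rfl fun i _ => ?_
      have h := (EuclideanSpace.proj i : EuclideanSpace ℝ (Fin n) →L[ℝ] ℝ).hasFDerivAt.comp x
        (hC.differentiable (by norm_num) x).hasFDerivAt
      have h' : HasFDerivAt (fun y => φ k y * V y i) _ x := h
      rw [h'.fderiv]; rfl
    have hCi : ∀ i, ContDiff ℝ 1 (fun y => φ k y * V y i) := fun i =>
      (hφc k).mul ((EuclideanSpace.proj i : EuclideanSpace ℝ (Fin n) →L[ℝ] ℝ).contDiff.comp hV)
    have hsi : ∀ i, HasCompactSupport (fun y => φ k y * V y i) := fun i =>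
      (hφs k).mul_right
    simp_rw [e]
    rw [integral_finsetSum]
    · exact Finset.sum_eq_zero fun i _ => integral_fderiv_zero _ (hCi i) (hsi i) _
    · intro i _
      exact (((hCi i).continuous_fderiv (by norm_num)).clm_apply
        continuous_const).integrable_of_hasCompactSupport ((hsi i).fderiv_apply (𝕜 := ℝ) _)
  have hge : ∀ k, 0 ≤ ∫ x, φ k x * vdiv V x := by
    intro k
    have i1 : Integrable (fun x => φ k x * vdiv V x) :=
      ((hφc k).continuous.mul hdc).integrable_of_hasCompactSupport (hφs k).mul_right
    have i2 : Integrable (fun x => fderiv ℝ (φ k) x (V x)) := by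
      refine (((hφc k).continuous_fderiv (by norm_num)).clm_apply
        hV.continuous).integrable_of_hasCompactSupport ?_
      refine ((hφs k).fderiv (𝕜 := ℝ)).mono fun x hx h => hx ?_
      simp [h]
    have h := hzero k
    simp_rw [hdiv k] at h
    rw [integral_add i1 i2] at h
    have : ∫ x, fderiv ℝ (φ k) x (V x) ≤ 0 := integral_nonpos (hφd k)
    linarith
  have hlim : Tendsto (fun k => ∫ x, φ k x * vdiv V x) atTop
      (nhds (∫ x, (ball (0 : EuclideanSpace ℝ (Fin n)) r).indicator (vdiv V) x)) := by
    refine tendsto_integral_of_dominated_convergence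
      (fun x => (ball (0 : EuclideanSpace ℝ (Fin n)) r).indicator (fun x => |vdiv V x|) x)
      (fun k => ((hφc k).continuous.mul hdc).aestronglyMeasurable) ?_ ?_ ?_
    · rw [integrable_indicator_iff measurableSet_ball]
      exact (hdc.abs.continuousOn.integrableOn_compact
        (isCompact_closedBall (0 : EuclideanSpace ℝ (Fin n)) r)).mono_set ball_subset_closedBall
    · intro k
      refine Eventually.of_forall fun x => ?_
      by_cases hx : x ∈ ball (0 : EuclideanSpace ℝ (Fin n)) r
      · rw [Set.indicator_of_mem hx, norm_mul, Real.norm_eq_abs, Real.norm_eq_abs,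
          abs_of_nonneg (Real.smoothTransition.nonneg _)]
        exact mul_le_of_le_one_left (abs_nonneg _) (Real.smoothTransition.le_one _)
      · rw [Set.indicator_of_notMem hx, hφ0 k x hx]; simp
    · refine Eventually.of_forall fun x => ?_
      by_cases hx : x ∈ ball (0 : EuclideanSpace ℝ (Fin n)) r
      · rw [Set.indicator_of_mem hx]
        have hx' : ‖x‖ < r := by simpa using hx
        have hd : 0 < r ^ 2 - ‖x‖ ^ 2 := by
          have : ‖x‖ ^ 2 < r ^ 2 := by gcongr
          linarith
        apply tendsto_const_nhds.congr'
        have ht : Tendsto (fun k : ℕ => (k : ℝ) * (r ^ 2 - ‖x‖ ^ 2)) atTop atTop :=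
          tendsto_natCast_atTop_atTop.atTop_mul_const hd
        filter_upwards [ht.eventually_ge_atTop 1] with k hk
        have : φ k x = 1 := Real.smoothTransition.one_of_one_le hk
        rw [this, one_mul]
      · rw [Set.indicator_of_notMem hx]
        simp [hφ0 _ x hx]
  rw [integral_indicator measurableSet_ball] at hlim
  exact ge_of_tendsto' hlim hge

lemma vdiv_stress {n : ℕ} (p : ℝ) (hp : 1 < p) (u : EuclideanSpace ℝ (Fin n) → ℝ)
    (hu : ContDiff ℝ 2 u) :
    ContDiff ℝ 1 (gradient u) ∧
    ContDiff ℝ 1 (fun y => ‖gradient u y‖ ^ (p - 2) • (⟪gradient u y, y⟫ • gradient u y)) ∧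
    ∀ (x : EuclideanSpace ℝ (Fin n)) (c : ℝ),
      -vdiv (fun y => ‖gradient u y‖ ^ (p - 2) • gradient u y) x = c →
      vdiv (fun y => ‖gradient u y‖ ^ (p - 2) • (⟪gradient u y, y⟫ • gradient u y)) x
        = -(⟪gradient u x, x⟫ * c) + fderiv ℝ (fun y => (1 / p) * ‖gradient u y‖ ^ p) x x
          + ‖gradient u x‖ ^ p := by
  have hg : ContDiff ℝ 1 (gradient u) :=
    ((InnerProductSpace.toDual ℝ (EuclideanSpace ℝ (Fin n))).symm.contDiff).comp
      (hu.fderiv_right (m := 1) (by norm_num))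
  have hgd : Differentiable ℝ (gradient u) := hg.differentiable (by norm_num)
  let B : EuclideanSpace ℝ (Fin n) →L[ℝ] EuclideanSpace ℝ (Fin n) →L[ℝ]
      (EuclideanSpace ℝ (Fin n) →L[ℝ] EuclideanSpace ℝ (Fin n)) :=
    (ContinuousLinearMap.smulRightL ℝ (EuclideanSpace ℝ (Fin n))
      (EuclideanSpace ℝ (Fin n))).comp (innerSL ℝ)
  obtain ⟨hB1, hB2⟩ := aux_contDiff (p - 2) (by linarith) B
  have hW : (fun y => ‖gradient u y‖ ^ (p - 2) • (⟪gradient u y, y⟫ • gradient u y))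
      = fun y => (‖gradient u y‖ ^ (p - 2) • B (gradient u y) (gradient u y)) y := by
    funext y; rfl
  refine ⟨hg, ?_, ?_⟩
  · rw [hW]
    exact (hB1.comp hg).clm_apply contDiff_id
  intro x c hc
  have hE : fderiv ℝ (fun y => (1 / p) * ‖gradient u y‖ ^ p) x x
      = ‖gradient u x‖ ^ (p - 2) * ⟪gradient u x, fderiv ℝ (gradient u) x x⟫ := by
    have h := ((hasFDerivAt_norm_rpow (gradient u x) hp).comp x
      (hgd x).hasFDerivAt).const_mul (1 / p)
    have h' : HasFDerivAt (fun y => (1 / p) * ‖gradient u y‖ ^ p) _ x := h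
    rw [h'.fderiv]
    simp
    field_simp
  rw [hE]
  rcases eq_or_ne (gradient u x) 0 with h0 | h0
  · have h1 : HasFDerivAt (fun y => ‖gradient u y‖ ^ (p - 2) • B (gradient u y) (gradient u y))
        ((0 : EuclideanSpace ℝ (Fin n) →L[ℝ]
          (EuclideanSpace ℝ (Fin n) →L[ℝ] EuclideanSpace ℝ (Fin n))).comp
          (fderiv ℝ (gradient u) x)) x := by
      rw [← h0] at hB2
      exact hB2.comp x (hgd x).hasFDerivAt
    have h2 := h1.clm_apply (hasFDerivAt_id x)
    have h3 : HasFDerivAt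
      (fun y => ‖gradient u y‖ ^ (p - 2) • (⟪gradient u y, y⟫ • gradient u y)) _ x := h2
    unfold vdiv
    rw [h3.fderiv, h0]
    simp [Real.zero_rpow (by linarith : p ≠ 0)]
  · have hF : DifferentiableAt ℝ (fun y => ‖gradient u y‖ ^ (p - 2) • gradient u y) x := by
      have hnr : DifferentiableAt ℝ (fun y => ‖gradient u y‖ ^ (p - 2)) x :=
        ((hgd x).norm ℝ h0).rpow_const (Or.inl (norm_ne_zero_iff.mpr h0))
      exact hnr.smul (hgd x)
    have hI : HasFDerivAt (fun y => ⟪gradient u y, y⟫) _ x :=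
      (hgd x).hasFDerivAt.inner ℝ (hasFDerivAt_id x)
    have hWd := hI.smul hF.hasFDerivAt
    have hW2 : (fun y => ‖gradient u y‖ ^ (p - 2) • (⟪gradient u y, y⟫ • gradient u y))
        = fun y => ⟪gradient u y, y⟫ • (‖gradient u y‖ ^ (p - 2) • gradient u y) := by
      funext y; rw [smul_comm]
    have hWd' : HasFDerivAt
      (fun y => ⟪gradient u y, y⟫ • (‖gradient u y‖ ^ (p - 2) • gradient u y)) _ x := hWd
    have hsymm : ∀ v w, ⟪fderiv ℝ (gradient u) x v, w⟫ = ⟪fderiv ℝ (gradient u) x w, v⟫ := by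
      have hs : IsSymmSndFDerivAt ℝ u x := hu.contDiffAt.isSymmSndFDerivAt (by simp)
      have hdd : HasFDerivAt (fderiv ℝ u) (fderiv ℝ (fderiv ℝ u) x) x :=
        ((hu.fderiv_right (m := 1) (by norm_num)).differentiable (by norm_num) x).hasFDerivAt
      have hgg := ((InnerProductSpace.toDual ℝ
        (EuclideanSpace ℝ (Fin n))).symm.toContinuousLinearEquiv.toContinuousLinearMap.hasFDerivAt).comp x hdd
      have hgg' : HasFDerivAt (gradient u) _ x := hgg
      intro v w
      rw [hgg'.fderiv]
      have e : ∀ v w, ⟪(InnerProductSpace.toDual ℝ (EuclideanSpace ℝ (Fin n))).symm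
          (fderiv ℝ (fderiv ℝ u) x v), w⟫ = fderiv ℝ (fderiv ℝ u) x v w := by
        intro v w; exact InnerProductSpace.toDual_symm_apply
      exact (e v w).trans ((hs v w).trans (e w v).symm)
    rw [hW2, ← hc]
    set F : EuclideanSpace ℝ (Fin n) → EuclideanSpace ℝ (Fin n) :=
      fun y => ‖gradient u y‖ ^ (p - 2) • gradient u y with hFdef
    have key : vdiv (fun y => ⟪gradient u y, y⟫ • F y) x
        = ⟪gradient u x, x⟫ * vdiv F x
          + (⟪fderiv ℝ (gradient u) x (F x), x⟫ + ⟪gradient u x, F x⟫) := by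
      unfold vdiv
      rw [hWd'.fderiv, Finset.mul_sum]
      have hx : F x = ∑ i, F x i • EuclideanSpace.single i (1 : ℝ) := by
        ext j; simp [Finset.sum_apply, Pi.single_apply]
      have hlin : ⟪fderiv ℝ (gradient u) x (F x), x⟫ + ⟪gradient u x, F x⟫
          = ∑ i, F x i * (⟪fderiv ℝ (gradient u) x (EuclideanSpace.single i (1 : ℝ)), x⟫
            + ⟪gradient u x, EuclideanSpace.single i (1 : ℝ)⟫) := by
        conv_lhs => rw [hx]
        simp only [map_sum, map_smul, sum_inner, inner_sum, real_inner_smul_left,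
          real_inner_smul_right, mul_add, Finset.sum_add_distrib]
      rw [hlin, ← Finset.sum_add_distrib]
      refine Finset.sum_congr rfl fun i _ => ?_
      simp [fderivInnerCLM_apply, hFdef]
      ring
    rw [key, hsymm (F x) x]
    have hz' : 0 < ‖gradient u x‖ := norm_pos_iff.mpr h0
    have e2 : ‖gradient u x‖ ^ p = ‖gradient u x‖ ^ (p - 2) * (‖gradient u x‖ * ‖gradient u x‖) := by
      have : p = (p - 2) + 1 + 1 := by ring
      conv_lhs => rw [this, Real.rpow_add hz', Real.rpow_add hz', Real.rpow_one]
      ring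
    rw [hFdef]
    simp only [real_inner_smul_right, real_inner_self_eq_norm_mul_norm]
    rw [e2, real_inner_comm (gradient u x)]
    ring

lemma mono_aux {n : ℕ} (p : ℝ) (e : EuclideanSpace ℝ (Fin n) → ℝ) (he : ContDiff ℝ 1 e)
    (h : ∀ r : ℝ, 0 < r → 0 ≤ ∫ x in ball (0 : EuclideanSpace ℝ (Fin n)) r,
      (p * e x + fderiv ℝ e x x)) :
    MonotoneOn (fun r : ℝ => r ^ (p - (n : ℝ)) *
      ∫ x in ball (0 : EuclideanSpace ℝ (Fin n)) r, e x) (Set.Ioi 0) := by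
  have scale : ∀ (f : EuclideanSpace ℝ (Fin n) → ℝ) (r : ℝ), 0 < r →
      ∫ x in ball (0 : EuclideanSpace ℝ (Fin n)) r, f x
        = r ^ n * ∫ x in ball (0 : EuclideanSpace ℝ (Fin n)) 1, f (r • x) := by
    intro f r hr
    rw [Measure.setIntegral_comp_smul_of_pos volume f _ hr]
    simp only [finrank_euclideanSpace, Fintype.card_fin, smul_eq_mul]
    rw [_root_.smul_ball hr.ne', smul_zero, Real.norm_of_nonneg hr.le, mul_one, ← mul_assoc,
      mul_inv_cancel₀ (by positivity), one_mul]
  have hdc := he.continuous_fderiv (by norm_num)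
  have hint : ∀ f : EuclideanSpace ℝ (Fin n) → ℝ, Continuous f →
      IntegrableOn f (ball (0 : EuclideanSpace ℝ (Fin n)) 1) := fun f hf =>
    (hf.continuousOn.integrableOn_compact
      (isCompact_closedBall (0 : EuclideanSpace ℝ (Fin n)) 1)).mono_set ball_subset_closedBall
  have hder : ∀ t : ℝ, HasDerivAt
      (fun t : ℝ => ∫ x in ball (0 : EuclideanSpace ℝ (Fin n)) 1, e (t • x))
      (∫ x in ball (0 : EuclideanSpace ℝ (Fin n)) 1, fderiv ℝ e (t • x) x) t := by
    intro t
    obtain ⟨C, hC⟩ := (isCompact_closedBall (0 : EuclideanSpace ℝ (Fin n)) (|t| + 1)).exists_bound_of_continuousOn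
      hdc.continuousOn
    refine (hasDerivAt_integral_of_dominated_loc_of_deriv_le (s := ball t 1)
      (F := fun t x => e (t • x)) (F' := fun t x => fderiv ℝ e (t • x) x)
      (bound := fun _ => C) (ball_mem_nhds t one_pos) ?_ ?_ ?_ ?_ ?_ ?_).2
    · exact Eventually.of_forall fun s =>
        (he.continuous.comp (continuous_const_smul s)).aestronglyMeasurable
    · exact hint _ (he.continuous.comp (continuous_const_smul t))
    · exact ((hdc.comp (continuous_const_smul t)).clm_apply continuous_id).aestronglyMeasurable
    · rw [ae_restrict_iff' measurableSet_ball]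
      refine Eventually.of_forall fun x hx s hs => ?_
      have hx' : ‖x‖ ≤ 1 := by
        have : ‖x‖ < 1 := by simpa using hx
        exact this.le
      have hs' : |s| ≤ |t| + 1 := by
        have : |s - t| < 1 := by simpa [Real.dist_eq] using hs
        have := abs_sub_abs_le_abs_sub s t
        linarith
      have hm : s • x ∈ closedBall (0 : EuclideanSpace ℝ (Fin n)) (|t| + 1) := by
        rw [mem_closedBall_zero_iff, norm_smul, Real.norm_eq_abs]
        calc |s| * ‖x‖ ≤ (|t| + 1) * 1 := by gcongr
          _ = _ := mul_one _
      have hb := hC _ hm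
      calc ‖fderiv ℝ e (s • x) x‖ ≤ ‖fderiv ℝ e (s • x)‖ * ‖x‖ := ContinuousLinearMap.le_opNorm _ _
        _ ≤ C * 1 := by
            have := (norm_nonneg _).trans hb
            gcongr
        _ = C := mul_one _
    · exact hint _ continuous_const
    · refine Eventually.of_forall fun x s _ => ?_
      have h1 : HasDerivAt (fun s : ℝ => s • x) x s := by
        simpa using (hasDerivAt_id s).smul_const x
      exact ((he.differentiable (by norm_num) (s • x)).hasFDerivAt).comp_hasDerivAt s h1
  have hJ : ∀ t : ℝ, 0 < t → HasDerivAt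
      (fun t : ℝ => t ^ p * ∫ x in ball (0 : EuclideanSpace ℝ (Fin n)) 1, e (t • x))
      (p * t ^ (p - 1) * (∫ x in ball (0 : EuclideanSpace ℝ (Fin n)) 1, e (t • x)) +
       t ^ p * ∫ x in ball (0 : EuclideanSpace ℝ (Fin n)) 1, fderiv ℝ e (t • x) x) t := by
    intro t ht
    exact (Real.hasDerivAt_rpow_const (Or.inl ht.ne')).mul (hder t)
  have hJm : MonotoneOn
      (fun t : ℝ => t ^ p * ∫ x in ball (0 : EuclideanSpace ℝ (Fin n)) 1, e (t • x))
      (Set.Ioi 0) := by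
    refine monotoneOn_of_deriv_nonneg (convex_Ioi 0)
      (fun t ht => (hJ t ht).continuousAt.continuousWithinAt)
      (fun t ht => (hJ t (by simpa using ht)).differentiableAt.differentiableWithinAt) ?_
    intro t ht
    have ht : 0 < t := by simpa using ht
    rw [(hJ t ht).deriv]
    have h1 := h t ht
    rw [scale _ t ht] at h1
    have h2 : 0 ≤ ∫ x in ball (0 : EuclideanSpace ℝ (Fin n)) 1,
        (p * e (t • x) + fderiv ℝ e (t • x) (t • x)) :=
      nonneg_of_mul_nonneg_right h1 (by positivity)
    simp only [map_smul, smul_eq_mul] at h2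
    rw [integral_add, integral_const_mul, integral_const_mul] at h2
    · have e1 : t ^ p = t ^ (p - 1) * t := by
        rw [← Real.rpow_add_one ht.ne']; ring_nf
      rw [e1]
      have h3 : 0 ≤ t ^ (p - 1) := by positivity
      have := mul_nonneg h3 h2
      linarith
    · exact hint _ (continuous_const.mul (he.continuous.comp (continuous_const_smul t)))
    · exact hint _ (continuous_const.mul
        ((hdc.comp (continuous_const_smul t)).clm_apply continuous_id))
  refine hJm.congr fun t ht => ?_
  have ht : 0 < t := ht
  simp only
  rw [scale e t ht, ← mul_assoc, Real.rpow_sub ht, Real.rpow_natCast]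
  field_simp

/-- **Weak monotonicity formula for the p-Laplacian system**:
for a solution of `-div(|∇uᵢ|^{p-2}∇uᵢ) = Hᵢ(u)` with `H̃(u) ≤ 0` and `α ≥ p`,
the function `I_α(r) = r^{α-n} ∫_{B_r} (∑ᵢ (2/p)|∇uᵢ|^p - 2H̃(u))`
is nondecreasing in `r`. -/
theorem weak_monotonicity_pLaplacian
    (n m : ℕ) (hn : 1 ≤ n) (hm : 2 ≤ m) (p : ℝ) (hp : 1 < p)
    (H : Fin m → (Fin m → ℝ) → ℝ) (hH : ∀ i, ContDiff ℝ 1 (H i))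
    (Ht : (Fin m → ℝ) → ℝ) (hHt : ContDiff ℝ 2 Ht)
    (hHtgrad : ∀ i y, fderiv ℝ Ht y (Pi.single i 1) = H i y)
    (u : Fin m → EuclideanSpace ℝ (Fin n) → ℝ)
    (hu : ∀ i, ContDiff ℝ 2 (u i))
    (hsol : ∀ i x, -vdiv (fun y =>
        ‖gradient (u i) y‖ ^ (p - 2) • gradient (u i) y) x
        = H i (fun j => u j x))
    (hHneg : ∀ x : EuclideanSpace ℝ (Fin n), Ht (fun j => u j x) ≤ 0)
    (α : ℝ) (hα : p ≤ α) :
    ∀ r₁ r₂ : ℝ, 0 < r₁ → r₁ ≤ r₂ →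
      r₁ ^ (α - (n : ℝ)) * (∫ x in ball (0 : EuclideanSpace ℝ (Fin n)) r₁,
          ((∑ i, (2 / p) * ‖gradient (u i) x‖ ^ p) - 2 * Ht (fun j => u j x)))
        ≤ r₂ ^ (α - (n : ℝ)) * (∫ x in ball (0 : EuclideanSpace ℝ (Fin n)) r₂,
          ((∑ i, (2 / p) * ‖gradient (u i) x‖ ^ p) - 2 * Ht (fun j => u j x))) := by
  have hp0 : 0 < p := by linarith
  have hst := fun i => vdiv_stress p hp (u i) (hu i)
  have hUc : ContDiff ℝ 2 (fun x => fun j => u j x) := contDiff_pi.mpr hu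
  have hHu : ContDiff ℝ 1 (fun x => Ht (fun j => u j x)) :=
    (hHt.comp hUc).of_le (by norm_num)
  let e : EuclideanSpace ℝ (Fin n) → ℝ := fun x =>
    (∑ i, (1 / p) * ‖gradient (u i) x‖ ^ p) - Ht (fun j => u j x)
  have hei : ∀ i, ContDiff ℝ 1 (fun x => (1 / p) * ‖gradient (u i) x‖ ^ p) := fun i =>
    contDiff_const.mul ((hst i).1.norm_rpow hp)
  have he : ContDiff ℝ 1 e := (ContDiff.sum fun i _ => hei i).sub hHu
  have hdHu : ∀ x v, fderiv ℝ (fun x => Ht (fun j => u j x)) x v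
      = ∑ i, ⟪gradient (u i) x, v⟫ * H i (fun j => u j x) := by
    intro x v
    have h1 : HasFDerivAt (fun x => fun j => u j x)
        (ContinuousLinearMap.pi fun j => fderiv ℝ (u j) x) x :=
      hasFDerivAt_pi.mpr fun j => ((hu j).differentiable (by norm_num) x).hasFDerivAt
    have h2 := ((hHt.differentiable (by norm_num) (fun j => u j x)).hasFDerivAt).comp x h1
    have h3 : HasFDerivAt (fun x => Ht (fun j => u j x)) _ x := h2
    rw [h3.fderiv]
    have hv : (ContinuousLinearMap.pi fun j => fderiv ℝ (u j) x) v
        = ∑ i, (⟪gradient (u i) x, v⟫) • (Pi.single i 1 : Fin m → ℝ) := by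
      ext j
      simp [Finset.sum_apply, Pi.single_apply, gradient]
    rw [ContinuousLinearMap.comp_apply, hv, map_sum]
    refine Finset.sum_congr rfl fun i _ => ?_
    rw [map_smul, hHtgrad, smul_eq_mul]
  let W : Fin m → EuclideanSpace ℝ (Fin n) → EuclideanSpace ℝ (Fin n) := fun i y =>
    ‖gradient (u i) y‖ ^ (p - 2) • (⟪gradient (u i) y, y⟫ • gradient (u i) y)
  let V : EuclideanSpace ℝ (Fin n) → EuclideanSpace ℝ (Fin n) := fun y => ∑ i, W i y
  have hW : ∀ i, ContDiff ℝ 1 (W i) := fun i => (hst i).2.1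
  have hV : ContDiff ℝ 1 V := ContDiff.sum fun i _ => hW i
  have hVpos : ∀ x, 0 ≤ ⟪x, V x⟫ := by
    intro x
    simp only [V, W, inner_sum, real_inner_smul_right]
    refine Finset.sum_nonneg fun i _ => ?_
    rw [real_inner_comm (gradient (u i) x) x]
    exact mul_nonneg (by positivity) (mul_self_nonneg _)
  have hVdiv : ∀ x, vdiv V x = fderiv ℝ e x x + ∑ i, ‖gradient (u i) x‖ ^ p := by
    intro x
    have h1 : vdiv V x = ∑ i, vdiv (W i) x := by
      have hs : HasFDerivAt V (∑ i, fderiv ℝ (W i) x) x :=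
        HasFDerivAt.fun_sum fun i _ => ((hW i).differentiable (by norm_num) x).hasFDerivAt
      unfold vdiv
      rw [hs.fderiv, Finset.sum_comm]
      refine Finset.sum_congr rfl fun j _ => ?_
      simp
    have h2 : fderiv ℝ e x x = (∑ i, fderiv ℝ (fun x => (1 / p) * ‖gradient (u i) x‖ ^ p) x x)
        - ∑ i, ⟪gradient (u i) x, x⟫ * H i (fun j => u j x) := by
      have hs : HasFDerivAt e ((∑ i, fderiv ℝ (fun x => (1 / p) * ‖gradient (u i) x‖ ^ p) x)
          - fderiv ℝ (fun x => Ht (fun j => u j x)) x) x :=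
        (HasFDerivAt.fun_sum fun i _ => ((hei i).differentiable (by norm_num) x).hasFDerivAt).sub
          (hHu.differentiable (by norm_num) x).hasFDerivAt
      rw [hs.fderiv, ← hdHu]
      simp
    rw [h1, h2, ← Finset.sum_sub_distrib, ← Finset.sum_add_distrib]
    refine Finset.sum_congr rfl fun i _ => ?_
    have := (hst i).2.2 x _ (hsol i x)
    simp only [W]
    rw [this]; ring
  have hnn : ∀ x, 0 ≤ e x := by
    intro x
    have : 0 ≤ ∑ i, (1 / p) * ‖gradient (u i) x‖ ^ p :=
      Finset.sum_nonneg fun i _ => by positivity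
    have := hHneg x
    simp only [e]; linarith
  have hmono := mono_aux p e he (by
    intro r hr
    refine (integral_div_nonneg V hV hVpos r hr).trans ?_
    have hint : ∀ f : EuclideanSpace ℝ (Fin n) → ℝ, Continuous f →
      IntegrableOn f (ball (0 : EuclideanSpace ℝ (Fin n)) r) := fun f hf =>
      (hf.continuousOn.integrableOn_compact
        (isCompact_closedBall (0 : EuclideanSpace ℝ (Fin n)) r)).mono_set ball_subset_closedBall
    have hfx : Continuous fun x => fderiv ℝ e x x :=
      (he.continuous_fderiv (by norm_num)).clm_apply continuous_id
    refine setIntegral_mono ?_ ?_ ?_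
    · refine hint _ ?_
      rw [funext hVdiv]
      exact hfx.add (continuous_finsetSum _ fun i _ => ((hst i).1.norm_rpow hp).continuous)
    · exact hint _ ((continuous_const.mul he.continuous).add hfx)
    · intro x
      simp only [hVdiv]
      have : p * e x = ∑ i, ‖gradient (u i) x‖ ^ p - p * Ht (fun j => u j x) := by
        simp only [e]
        rw [mul_sub, ← Finset.mul_sum, ← mul_assoc, mul_one_div_cancel hp0.ne', one_mul]
      have := mul_nonneg hp0.le (neg_nonneg.mpr (hHneg x))
      linarith)
  intro r₁ r₂ hr1 hr12
  have hr2 : 0 < r₂ := hr1.trans_le hr12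
  have hI : ∀ r : ℝ, (∫ x in ball (0 : EuclideanSpace ℝ (Fin n)) r,
      ((∑ i, (2 / p) * ‖gradient (u i) x‖ ^ p) - 2 * Ht (fun j => u j x)))
      = 2 * ∫ x in ball (0 : EuclideanSpace ℝ (Fin n)) r, e x := by
    intro r
    rw [← integral_const_mul]
    congr 1
    funext x
    simp only [e, mul_sub, Finset.mul_sum]
    congr 1
    refine Finset.sum_congr rfl fun i _ => ?_
    ring
  have hm := hmono (Set.mem_Ioi.mpr hr1) (Set.mem_Ioi.mpr hr2) hr12
  simp only at hm
  have hsplit : ∀ r : ℝ, 0 < r → r ^ (α - (n : ℝ)) = r ^ (α - p) * r ^ (p - (n : ℝ)) := by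
    intro r hr
    rw [← Real.rpow_add hr]; ring_nf
  rw [hI, hI, hsplit r₁ hr1, hsplit r₂ hr2]
  have hA : r₁ ^ (α - p) ≤ r₂ ^ (α - p) := Real.rpow_le_rpow hr1.le hr12 (by linarith)
  have hnn1 : 0 ≤ ∫ x in ball (0 : EuclideanSpace ℝ (Fin n)) r₁, e x :=
    integral_nonneg hnn
  have hP : 0 ≤ r₁ ^ (p - (n : ℝ)) * ∫ x in ball (0 : EuclideanSpace ℝ (Fin n)) r₁, e x :=
    mul_nonneg (by positivity) hnn1
  have := mul_le_mul hA hm hP (by positivity)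
  linarith
end
end
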